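/- (Ingham's Tauberian theorem.) Let D be a connected open subset of \mathbb{C} containing the interval (0,h] for some h > 0, and for t \in (0,h] let \delta(t) be the distance from t to the complement of D. Suppose \varphi, \chi : D \to \mathbb{C} satisfy: (a) \varphi and \chi are holomorphic on D and positive on (0,h]; (b) -t\varphi'(t) \to \infty as t \to 0^+; (c) -\delta(t)\varphi'(t)/(t\sqrt{\varphi''(t)}) \to \infty as t \to 0^+; (d) \varphi''(t+z) = O(\varphi''(t)) and \chi(t+z) = O(\chi(t)) uniformly over |z| < \delta(t) as t \to 0^+. Let A : [0,\infty) \to \mathbb{R} be weakly increasing with A(0) = 0, set f(z) = \int_0^{\infty} e^{-zu}\,dA(u) (a Lebesgue–Stieltjes integral), and assume f(z) exists for all Re(z) > 0. Suppose further: (i) f(z) \sim \chi(z) e^{\varphi(z)} as z \to 0 with z \in D; (ii) for each fixed \Delta > 0, f(z) = O(\chi(|z|) e^{\varphi(|z|)}) as z \to 0 in the region |Im(z)| \le \Delta\,Re(z). Then A(x) \sim \frac{\chi(\psi(x)) e^{\varphi(\psi(x)) + x\psi(x)}}{\psi(x) \sqrt{2\pi \varphi''(\psi(x))}} as x \to \infty,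 where \psi denotes the inverse function of -\varphi'. -/

import Mathlib

open Filter Topology MeasureTheory Set

noncomputable section

open scoped FourierTransform

/-- The triangular bump function supported on `[-1, 1]`. -/
def tent (ξ : ℝ) : ℝ := max 0 (1 - |ξ|)

lemma tent_nonneg (ξ : ℝ) : 0 ≤ tent ξ := le_max_left _ _

lemma tent_le_one (ξ : ℝ) : tent ξ ≤ 1 := max_le zero_le_one (by linarith [abs_nonneg ξ])

lemma tent_eq_zero {ξ : ℝ} (h : 1 ≤ |ξ|) : tent ξ = 0 := max_eq_left (by linarith)

lemma continuous_tent : Continuous tent := by unfold tent; fun_prop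

lemma hasCompactSupport_tent : HasCompactSupport tent :=
  HasCompactSupport.intro (isCompact_Icc (a := (-1 : ℝ)) (b := 1)) fun x hx => tent_eq_zero (by
    by_contra! h
    exact hx ⟨(abs_lt.1 h).1.le, (abs_lt.1 h).2.le⟩)

/-- The cosine transform of the tent function. -/
def tentCos (w : ℝ) : ℝ := ∫ ξ, tent ξ * Real.cos (ξ * w)

lemma integrable_tent : Integrable tent :=
  continuous_tent.integrable_of_hasCompactSupport hasCompactSupport_tent

lemma integrable_tent_mul_cos (w : ℝ) : Integrable fun ξ => tent ξ * Real.cos (ξ * w) :=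
  (continuous_tent.mul (by fun_prop)).integrable_of_hasCompactSupport
    hasCompactSupport_tent.mul_right

lemma tentCos_eq_intervalIntegral (w : ℝ) :
    tentCos w = (∫ ξ in (-1 : ℝ)..0, (1 + ξ) * Real.cos (ξ * w)) +
      ∫ ξ in (0 : ℝ)..1, (1 - ξ) * Real.cos (ξ * w) := by
  have h1 : tentCos w = ∫ ξ in (-1 : ℝ)..1, tent ξ * Real.cos (ξ * w) := by
    rw [intervalIntegral.integral_of_le (by norm_num), tentCos,
      setIntegral_eq_integral_of_forall_compl_eq_zero]
    intro x hx
    rw [tent_eq_zero, zero_mul]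
    by_contra! h
    exact hx ⟨(abs_lt.1 h).1, (abs_lt.1 h).2.le⟩
  rw [h1, ← intervalIntegral.integral_add_adjacent_intervals (b := 0)
    (integrable_tent_mul_cos w).intervalIntegrable (integrable_tent_mul_cos w).intervalIntegrable]
  congr 1
  · refine intervalIntegral.integral_congr fun x hx => ?_
    rw [uIcc_of_le (by norm_num)] at hx
    simp only [tent]
    rw [abs_of_nonpos hx.2, max_eq_right (by linarith [hx.1])]; ring
  · refine intervalIntegral.integral_congr fun x hx => ?_
    rw [uIcc_of_le (by norm_num)] at hx
    simp only [tent]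
    rw [abs_of_nonneg hx.1, max_eq_right (by linarith [hx.2])]

lemma tentCos_mul_sq (w : ℝ) : tentCos w * w ^ 2 = 2 * (1 - Real.cos w) := by
  rcases eq_or_ne w 0 with rfl | hw
  · simp
  rw [tentCos_eq_intervalIntegral]
  have e1 : ∫ ξ in (-1 : ℝ)..0, (1 + ξ) * Real.cos (ξ * w) =
      ((1 + 0) * Real.sin (0 * w) / w + Real.cos (0 * w) / w ^ 2) -
      ((1 + -1) * Real.sin (-1 * w) / w + Real.cos (-1 * w) / w ^ 2) := by
    refine intervalIntegral.integral_eq_sub_of_hasDerivAt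
      (f := fun ξ => (1 + ξ) * Real.sin (ξ * w) / w + Real.cos (ξ * w) / w ^ 2)
      (fun x _ => ?_) (by apply Continuous.intervalIntegrable; fun_prop)
    have h0 : HasDerivAt (fun ξ : ℝ => ξ * w) w x := by simpa using (hasDerivAt_id x).mul_const w
    have h2 := ((((hasDerivAt_id x).const_add 1).mul h0.sin).div_const w).add
      (h0.cos.div_const (w ^ 2))
    refine h2.congr_deriv ?_
    simp only [id]
    field_simp
    ring
  have e2 : ∫ ξ in (0 : ℝ)..1, (1 - ξ) * Real.cos (ξ * w) =
      ((1 - 1) * Real.sin (1 * w) / w - Real.cos (1 * w) / w ^ 2) -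
      ((1 - 0) * Real.sin (0 * w) / w - Real.cos (0 * w) / w ^ 2) := by
    refine intervalIntegral.integral_eq_sub_of_hasDerivAt
      (f := fun ξ => (1 - ξ) * Real.sin (ξ * w) / w - Real.cos (ξ * w) / w ^ 2)
      (fun x _ => ?_) (by apply Continuous.intervalIntegrable; fun_prop)
    have h0 : HasDerivAt (fun ξ : ℝ => ξ * w) w x := by simpa using (hasDerivAt_id x).mul_const w
    have h2 := ((((hasDerivAt_id x).const_sub 1).mul h0.sin).div_const w).sub
      (h0.cos.div_const (w ^ 2))
    refine h2.congr_deriv ?_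
    simp only [id]
    field_simp
    ring
  rw [e1, e2]
  simp only [neg_mul, one_mul, Real.cos_neg, zero_mul, Real.sin_zero, Real.cos_zero]
  field_simp
  ring

lemma tentCos_nonneg (w : ℝ) : 0 ≤ tentCos w := by
  rcases eq_or_ne w 0 with rfl | hw
  · exact integral_nonneg fun x => by simpa using tent_nonneg x
  · have h1 := tentCos_mul_sq w
    have h2 : 0 < w ^ 2 := by positivity
    by_contra! h
    nlinarith [Real.cos_le_one w]

lemma tentCos_le_integral (w : ℝ) : tentCos w ≤ ∫ ξ, tent ξ :=
  integral_mono (integrable_tent_mul_cos w) integrable_tent fun x =>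
    mul_le_of_le_one_right (tent_nonneg x) (Real.cos_le_one _)

lemma integral_tent_mul_exp (w : ℝ) :
    ∫ ξ : ℝ, (tent ξ : ℂ) * Complex.exp (-(ξ * w) * Complex.I) = tentCos w := by
  have hi : Integrable fun ξ : ℝ => (tent ξ : ℂ) * Complex.exp (-(ξ * w) * Complex.I) :=
    ((Complex.continuous_ofReal.comp continuous_tent).mul
      (by fun_prop)).integrable_of_hasCompactSupport
      ((hasCompactSupport_tent.comp_left Complex.ofReal_zero).mul_right)
  have hre : ∀ ξ : ℝ, ((tent ξ : ℂ) * Complex.exp (-(ξ * w) * Complex.I)).re =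
      tent ξ * Real.cos (ξ * w) := fun ξ => by
    rw [Complex.re_ofReal_mul, ← Complex.ofReal_mul, ← Complex.ofReal_neg,
      Complex.exp_ofReal_mul_I_re, Real.cos_neg]
  have him : ∀ ξ : ℝ, ((tent ξ : ℂ) * Complex.exp (-(ξ * w) * Complex.I)).im =
      - (tent ξ * Real.sin (ξ * w)) := fun ξ => by
    rw [Complex.im_ofReal_mul, ← Complex.ofReal_mul, ← Complex.ofReal_neg,
      Complex.exp_ofReal_mul_I_im, Real.sin_neg, mul_neg]
  apply Complex.ext
  · have := integral_re hi
    simp only [RCLike.re_to_complex] at this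
    rw [← this, Complex.ofReal_re, tentCos]
    simp_rw [hre]
  · have := integral_im hi
    simp only [RCLike.im_to_complex] at this
    rw [← this, Complex.ofReal_im]
    simp_rw [him]
    have h3 := integral_neg_eq_self (fun ξ => -(tent ξ * Real.sin (ξ * w))) volume
    simp only [tent, abs_neg, neg_mul, Real.sin_neg, mul_neg, neg_neg] at h3
    rw [integral_neg] at h3 ⊢
    simp only [tent]
    linarith

/-- A continuous compactly supported function with strictly positive Fourier transform. -/
def fejer (ξ : ℝ) : ℂ := tent ξ * (1 + Complex.exp (ξ * Real.pi * Complex.I))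

/-- The Fourier transform of `fejer`, as a positive real-valued kernel. -/
def fejerKernel (v : ℝ) : ℝ :=
  tentCos (2 * Real.pi * v) + tentCos (2 * Real.pi * v - Real.pi)

lemma continuous_fejer : Continuous fejer :=
  (Complex.continuous_ofReal.comp continuous_tent).mul (by fun_prop)

lemma fejer_eq_zero {ξ : ℝ} (h : 1 ≤ |ξ|) : fejer ξ = 0 := by
  simp [fejer, tent_eq_zero h]

lemma hasCompactSupport_fejer : HasCompactSupport fejer :=
  (hasCompactSupport_tent.comp_left Complex.ofReal_zero).mul_right

lemma integrable_fejer : Integrable fejer :=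
  continuous_fejer.integrable_of_hasCompactSupport hasCompactSupport_fejer

lemma norm_fejer_le (ξ : ℝ) : ‖fejer ξ‖ ≤ 2 := by
  rw [fejer, norm_mul, Complex.norm_real, Real.norm_of_nonneg (tent_nonneg ξ)]
  have : ‖(1 : ℂ) + Complex.exp (ξ * Real.pi * Complex.I)‖ ≤ 2 := by
    refine (norm_add_le _ _).trans ?_
    rw [← Complex.ofReal_mul, Complex.norm_exp_ofReal_mul_I, norm_one]; norm_num
  nlinarith [tent_le_one ξ, tent_nonneg ξ, norm_nonneg ((1 : ℂ) + Complex.exp (ξ * Real.pi * Complex.I))]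

lemma fourier_fejer (v : ℝ) : 𝓕 fejer v = fejerKernel v := by
  rw [Real.fourier_real_eq_integral_exp_smul, fejerKernel, Complex.ofReal_add,
    ← integral_tent_mul_exp, ← integral_tent_mul_exp, ← integral_add]
  · refine integral_congr_ae (Eventually.of_forall fun ξ => ?_)
    simp only [fejer, smul_eq_mul]
    rw [mul_left_comm, ← mul_add, mul_add, mul_one, ← Complex.exp_add]
    push_cast
    congr 3 <;> ring_nf
  all_goals
    exact ((Complex.continuous_ofReal.comp continuous_tent).mul
      (by fun_prop)).integrable_of_hasCompactSupport
      ((hasCompactSupport_tent.comp_left Complex.ofReal_zero).mul_right)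

lemma continuous_fejerKernel : Continuous fejerKernel := by
  have h : Continuous (𝓕 fejer) := VectorFourier.fourierIntegral_continuous
    Real.continuous_fourierChar (by exact continuous_inner) integrable_fejer
  have h2 : fejerKernel = fun v => (𝓕 fejer v).re := by
    funext v; rw [fourier_fejer, Complex.ofReal_re]
  rw [h2]
  exact Complex.continuous_re.comp h

lemma four_le_fejerKernel_mul (v : ℝ) :
    4 ≤ fejerKernel v * (2 * (2 * Real.pi * v) ^ 2 + 2 * Real.pi ^ 2) := by
  set w := 2 * Real.pi * v
  have h1 := tentCos_mul_sq w
  have h2 := tentCos_mul_sq (w - Real.pi)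
  rw [Real.cos_sub_pi] at h2
  have h3 := mul_nonneg (tentCos_nonneg w) (by positivity : 0 ≤ w ^ 2 + 2 * Real.pi ^ 2)
  have h4 := mul_nonneg (tentCos_nonneg (w - Real.pi)) (sq_nonneg (w + Real.pi))
  change 4 ≤ (tentCos w + tentCos (w - Real.pi)) * _
  nlinarith

lemma fejerKernel_pos (v : ℝ) : 0 < fejerKernel v := by
  have h1 := four_le_fejerKernel_mul v
  by_contra! h
  nlinarith [mul_nonneg (neg_nonneg.2 h)
    (by positivity : 0 ≤ 2 * (2 * Real.pi * v) ^ 2 + 2 * Real.pi ^ 2)]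

lemma integrable_tentCos : Integrable tentCos := by
  have hc : AEStronglyMeasurable tentCos := by
    have : tentCos = fun w => (𝓕 (fun ξ : ℝ => (tent ξ : ℂ)) (w / (2 * Real.pi))).re := by
      funext w
      rw [Real.fourier_real_eq_integral_exp_smul, ← Complex.ofReal_re (tentCos w),
        ← integral_tent_mul_exp]
      congr 2
      funext ξ
      rw [smul_eq_mul, mul_comm]
      congr 2
      have := Real.pi_ne_zero
      push_cast
      field_simp
    rw [this]
    have h : Continuous (𝓕 (fun ξ : ℝ => (tent ξ : ℂ))) := VectorFourier.fourierIntegral_continuous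
      Real.continuous_fourierChar (by exact continuous_inner) integrable_tent.ofReal
    exact (Complex.continuous_re.comp (h.comp (by fun_prop))).aestronglyMeasurable
  refine (integrable_inv_one_add_sq.const_mul ((∫ ξ, tent ξ) + 4)).mono' hc
    (Eventually.of_forall fun w => ?_)
  rw [Real.norm_of_nonneg (tentCos_nonneg w), ← div_eq_mul_inv, le_div_iff₀ (by positivity)]
  nlinarith [tentCos_mul_sq w, tentCos_le_integral w, Real.neg_one_le_cos w]

lemma integrable_fejerKernel : Integrable fejerKernel :=
  (integrable_tentCos.comp_mul_left' (by positivity)).add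
    ((integrable_tentCos.comp_sub_right Real.pi).comp_mul_left' (by positivity))

lemma integral_fejerKernel_mul_exp (η : ℝ) :
    ∫ v : ℝ, (fejerKernel v : ℂ) * Complex.exp (η * v * Complex.I) = fejer (η / (2 * Real.pi)) := by
  have h := congrFun (Continuous.fourierInv_fourier_eq continuous_fejer integrable_fejer (by
    have : 𝓕 fejer = fun v => (fejerKernel v : ℂ) := funext fourier_fejer
    rw [this]; exact integrable_fejerKernel.ofReal)) (η / (2 * Real.pi))
  rw [← h, Real.fourierInv_eq']
  refine integral_congr_ae (Eventually.of_forall fun v => ?_)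
  simp only [fourier_fejer, smul_eq_mul]
  rw [mul_comm]
  congr 2
  have := Real.pi_ne_zero
  simp
  field_simp

lemma FiniteMeasure.tendsto_of_tendsto_charFun {μs : ℕ → FiniteMeasure ℝ} {μ : FiniteMeasure ℝ}
    (hμ : μ ≠ 0)
    (h : ∀ t : ℝ, Tendsto (fun n => charFun (μs n : Measure ℝ) t) atTop
      (𝓝 (charFun (μ : Measure ℝ) t))) :
    Tendsto μs atTop (𝓝 μ) := by
  have hmass : Tendsto (fun n => (μs n).mass) atTop (𝓝 μ.mass) := by
    have h0 := (Complex.continuous_re.tendsto _).comp (h 0)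
    simp only [charFun_zero] at h0
    rw [← NNReal.tendsto_coe]
    exact h0
  have hne : ∀ᶠ n in atTop, μs n ≠ 0 := by
    have h1 := hmass.eventually_ne (μ.mass_nonzero_iff.2 hμ)
    filter_upwards [h1] with n hn using (μs n).mass_nonzero_iff.1 hn
  have hnorm : ∀ (ν : FiniteMeasure ℝ), ν ≠ 0 → ∀ t, charFun (ν.normalize : Measure ℝ) t =
      ((ν.mass : ℝ) : ℂ)⁻¹ * charFun (ν : Measure ℝ) t := by
    intro ν hν t
    rw [ν.toMeasure_normalize_eq_of_nonzero hν, charFun_apply_real, charFun_apply_real,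
      integral_smul_nnreal_measure, NNReal.smul_def, Complex.real_smul, NNReal.coe_inv,
      Complex.ofReal_inv]
  rw [← FiniteMeasure.tendsto_normalize_iff_tendsto hμ]
  refine ⟨ProbabilityMeasure.tendsto_of_tendsto_charFun fun t => ?_, hmass⟩
  rw [hnorm μ hμ]
  have h2 : Tendsto (fun n => (((μs n).mass : ℝ) : ℂ)⁻¹ * charFun (μs n : Measure ℝ) t) atTop
      (𝓝 (((μ.mass : ℝ) : ℂ)⁻¹ * charFun (μ : Measure ℝ) t)) := by
    refine Tendsto.mul (Tendsto.inv₀ ?_ ?_) (h t)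
    · exact (Complex.continuous_ofReal.tendsto _).comp (NNReal.tendsto_coe.2 hmass)
    · simpa using μ.mass_nonzero_iff.2 hμ
  refine h2.congr' ?_
  filter_upwards [hne] with n hn using (hnorm _ hn t).symm

lemma fejerKernel_le (v : ℝ) : fejerKernel v ≤ 2 * ∫ ξ, tent ξ := by
  unfold fejerKernel
  linarith [tentCos_le_integral (2 * Real.pi * v), tentCos_le_integral (2 * Real.pi * v - Real.pi)]

lemma integrable_fejerKernel_of_isFiniteMeasure (ν : Measure ℝ) [IsFiniteMeasure ν] :
    Integrable fejerKernel ν :=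
  (integrable_const (2 * ∫ ξ, tent ξ)).mono' continuous_fejerKernel.aestronglyMeasurable
    (Eventually.of_forall fun v => by
      rw [Real.norm_of_nonneg (fejerKernel_pos v).le]; exact fejerKernel_le v)

lemma isFiniteMeasure_withDensity_fejerKernel {ν : Measure ℝ} (h : Integrable fejerKernel ν) :
    IsFiniteMeasure (ν.withDensity fun v => ENNReal.ofReal (fejerKernel v)) :=
  isFiniteMeasure_withDensity_ofReal h.2

lemma integral_withDensity_fejerKernel {E : Type*} [NormedAddCommGroup E] [NormedSpace ℝ E]
    (ν : Measure ℝ) (g : ℝ → E) :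
    ∫ v, g v ∂(ν.withDensity fun v => ENNReal.ofReal (fejerKernel v)) =
      ∫ v, fejerKernel v • g v ∂ν := by
  rw [integral_withDensity_eq_integral_toReal_smul
    continuous_fejerKernel.measurable.ennreal_ofReal (by simp)]
  simp_rw [ENNReal.toReal_ofReal (fejerKernel_pos _).le]

lemma tendsto_integral_fejerKernel_mul {ν : ℕ → Measure ℝ} [∀ n, IsFiniteMeasure (ν n)]
    (h : ∀ η : ℝ, Tendsto
      (fun n => ∫ v : ℝ, (fejerKernel v : ℂ) * Complex.exp (η * v * Complex.I) ∂(ν n)) atTop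
      (𝓝 (fejer (η / (2 * Real.pi)))))
    (g : BoundedContinuousFunction ℝ ℝ) :
    Tendsto (fun n => ∫ v, fejerKernel v * g v ∂(ν n)) atTop (𝓝 (∫ v, fejerKernel v * g v)) := by
  have hfin := isFiniteMeasure_withDensity_fejerKernel integrable_fejerKernel
  have hfin' := fun n => isFiniteMeasure_withDensity_fejerKernel
    (integrable_fejerKernel_of_isFiniteMeasure (ν n))
  let m : FiniteMeasure ℝ := ⟨volume.withDensity fun v => ENNReal.ofReal (fejerKernel v), hfin⟩
  let ms : ℕ → FiniteMeasure ℝ := fun n =>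
    ⟨(ν n).withDensity fun v => ENNReal.ofReal (fejerKernel v), hfin' n⟩
  have hc : ∀ (ν : Measure ℝ) (t : ℝ),
      charFun (ν.withDensity fun v => ENNReal.ofReal (fejerKernel v)) t =
      ∫ v : ℝ, (fejerKernel v : ℂ) * Complex.exp (t * v * Complex.I) ∂ν := fun ν t => by
    rw [charFun_apply_real, integral_withDensity_fejerKernel]
    simp_rw [Complex.real_smul]
  have hm : m ≠ 0 := by
    intro h0
    have h1 : charFun (m : Measure ℝ) 0 = 0 := by rw [h0]; simp
    have h2 : charFun (m : Measure ℝ) 0 = fejer 0 := by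
      have h3 := hc volume 0
      rwa [integral_fejerKernel_mul_exp, zero_div] at h3
    rw [h2] at h1
    norm_num [fejer, tent] at h1
  have key : Tendsto ms atTop (𝓝 m) := by
    refine FiniteMeasure.tendsto_of_tendsto_charFun hm fun t => ?_
    have e1 : charFun (m : Measure ℝ) t = fejer (t / (2 * Real.pi)) := by
      rw [← integral_fejerKernel_mul_exp]; exact hc volume t
    rw [e1]
    exact (h t).congr fun n => (hc (ν n) t).symm
  rw [FiniteMeasure.tendsto_iff_forall_integral_tendsto] at key
  have := key g
  simp only [m, ms, FiniteMeasure.toMeasure_mk, integral_withDensity_fejerKernel, smul_eq_mul] at this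
  exact this

lemma integral_fejerKernel_mul_exp_eq (ν : Measure ℝ) [IsFiniteMeasure ν] {T : ℝ} (hT : 0 < T)
    (η : ℝ) :
    ∫ v : ℝ, (fejerKernel v : ℂ) * Complex.exp (η * v * Complex.I) ∂ν =
      ∫ s : ℝ, (2 * Real.pi : ℂ)⁻¹ * (fejer ((η - s / T) / (2 * Real.pi)) *
        (charFun ν (s / T) / T)) := by
  have e1 : ∀ v : ℝ, (fejerKernel v : ℂ) * Complex.exp (η * v * Complex.I) =
      ∫ ξ : ℝ, fejer ξ * Complex.exp ((η - 2 * Real.pi * ξ : ℝ) * v * Complex.I) := by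
    intro v
    rw [← fourier_fejer, Real.fourier_real_eq_integral_exp_smul, ← integral_mul_const]
    refine integral_congr_ae (Eventually.of_forall fun ξ => ?_)
    simp only [smul_eq_mul]
    rw [mul_comm (Complex.exp _) (fejer ξ), mul_assoc, ← Complex.exp_add]
    push_cast
    congr 2
    ring
  simp_rw [e1]
  rw [integral_integral_swap]
  · have e2 : ∀ ξ : ℝ, ∫ v : ℝ, fejer ξ *
        Complex.exp ((η - 2 * Real.pi * ξ : ℝ) * v * Complex.I) ∂ν =
        fejer ξ * charFun ν (η - 2 * Real.pi * ξ) := fun ξ => by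
      rw [integral_const_mul, charFun_apply_real]
    simp_rw [e2]
    have hpi := Real.pi_pos
    have e3 := Measure.integral_comp_mul_left (fun ξ : ℝ => fejer (ξ + η / (2 * Real.pi)) *
      charFun ν (η - 2 * Real.pi * (ξ + η / (2 * Real.pi)))) (-(2 * Real.pi * T)⁻¹)
    rw [integral_add_right_eq_self (fun ξ => fejer ξ * charFun ν (η - 2 * Real.pi * ξ))] at e3
    have e4 : |(-(2 * Real.pi * T)⁻¹)⁻¹| = 2 * Real.pi * T := by
      rw [inv_neg, inv_inv, abs_neg, abs_of_pos (by positivity)]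
    rw [e4] at e3
    have e5 : ∫ ξ, fejer ξ * charFun ν (η - 2 * Real.pi * ξ) = (2 * Real.pi * T : ℝ)⁻¹ •
        ((2 * Real.pi * T) • ∫ ξ, fejer ξ * charFun ν (η - 2 * Real.pi * ξ)) := by
      rw [smul_smul, inv_mul_cancel₀ (by positivity), one_smul]
    rw [e5, ← e3, ← integral_smul]
    refine integral_congr_ae (Eventually.of_forall fun s => ?_)
    simp only [Complex.real_smul]
    have a1 : -(2 * Real.pi * T)⁻¹ * s + η / (2 * Real.pi) = (η - s / T) / (2 * Real.pi) := by
      field_simp; ring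
    have a2 : η - 2 * Real.pi * ((η - s / T) / (2 * Real.pi)) = s / T := by
      field_simp; ring
    rw [a1, a2]
    push_cast
    rw [mul_inv]
    ring
  · have h1 : Integrable (fun p : ℝ × ℝ => fejer p.2) (ν.prod volume) :=
      integrable_fejer.comp_snd ν
    refine h1.mono ?_ (Eventually.of_forall fun p => ?_)
    · exact ((continuous_fejer.comp continuous_snd).mul (by fun_prop)).aestronglyMeasurable
    · simp only [Function.uncurry]
      rw [norm_mul, ← Complex.ofReal_mul, Complex.norm_exp_ofReal_mul_I, mul_one]

lemma integrable_exp_neg_mul_abs {c : ℝ} (hc : 0 < c) :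
    Integrable fun s : ℝ => Real.exp (-c * |s|) := by
  refine ((integrable_inv_one_add_sq.const_mul (1 + 2 / c ^ 2))).mono'
    (by fun_prop : Continuous fun s : ℝ => Real.exp (-c * |s|)).aestronglyMeasurable
    (Eventually.of_forall fun s => ?_)
  have h1 := Real.quadratic_le_exp_of_nonneg (mul_nonneg hc.le (abs_nonneg s))
  rw [Real.norm_of_nonneg (Real.exp_pos _).le, neg_mul, Real.exp_neg, ← div_eq_mul_inv,
    inv_le_comm₀ (Real.exp_pos _) (by positivity)]
  refine le_trans ?_ h1
  rw [inv_div, div_le_iff₀ (by positivity), mul_pow, sq_abs]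
  have h2 : 0 ≤ c * |s| := by positivity
  have h3 : (1 + c ^ 2 * s ^ 2 / 2) * (1 + 2 / c ^ 2) =
      1 + s ^ 2 + 2 / c ^ 2 + c ^ 2 * s ^ 2 / 2 := by field_simp; ring
  have h4 : 0 ≤ 2 / c ^ 2 := by positivity
  have h5 : 0 ≤ c ^ 2 * s ^ 2 / 2 := by positivity
  nlinarith

lemma tendsto_integral_fejerKernel_mul_exp {ν : ℕ → Measure ℝ} [∀ n, IsFiniteMeasure (ν n)]
    {T : ℕ → ℝ} (hT : Tendsto T atTop atTop)
    (hlim : ∀ s : ℝ, Tendsto (fun n => charFun (ν n) (s / T n) / T n) atTop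
      (𝓝 (√(2 * Real.pi) * Real.exp (-(1 / 2) * s ^ 2) : ℝ)))
    (hdom : ∀ K : ℝ, 0 < K → ∃ C c : ℝ, 0 < c ∧ ∀ᶠ n in atTop, ∀ s : ℝ, |s| ≤ K * T n →
      ‖charFun (ν n) (s / T n) / T n‖ ≤ C * Real.exp (-c * |s|)) (η : ℝ) :
    Tendsto (fun n => ∫ v : ℝ, (fejerKernel v : ℂ) * Complex.exp (η * v * Complex.I) ∂(ν n)) atTop
      (𝓝 (fejer (η / (2 * Real.pi)))) := by
  have hpi := Real.pi_pos
  obtain ⟨C, c, hc, hb⟩ := hdom (2 * Real.pi + |η|) (by positivity)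
  have hTpos := hT.eventually_gt_atTop 0
  have e1 : fejer (η / (2 * Real.pi)) = ∫ s : ℝ, (2 * Real.pi : ℂ)⁻¹ *
      (fejer ((η - 0) / (2 * Real.pi)) *
        (√(2 * Real.pi) * Real.exp (-(1 / 2) * s ^ 2) : ℝ)) := by
    rw [integral_const_mul, integral_const_mul, integral_complex_ofReal, integral_const_mul,
      integral_gaussian, sub_zero, div_div_eq_mul_div, div_one, mul_comm Real.pi,
      Real.mul_self_sqrt (by positivity)]
    push_cast
    have : (Real.pi : ℂ) ≠ 0 := by exact_mod_cast hpi.ne'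
    field_simp
  rw [e1]
  have key : Tendsto (fun n => ∫ s : ℝ, (2 * Real.pi : ℂ)⁻¹ *
      (fejer ((η - s / T n) / (2 * Real.pi)) * (charFun (ν n) (s / T n) / T n))) atTop
      (𝓝 (∫ s : ℝ, (2 * Real.pi : ℂ)⁻¹ * (fejer ((η - 0) / (2 * Real.pi)) *
        (√(2 * Real.pi) * Real.exp (-(1 / 2) * s ^ 2) : ℝ)))) := by
    refine tendsto_integral_filter_of_dominated_convergence
      (fun s => (2 * Real.pi)⁻¹ * (2 * (C * Real.exp (-c * |s|)))) ?_ ?_ ?_ ?_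
    · refine Eventually.of_forall fun n => AEStronglyMeasurable.const_mul ?_ _
      refine AEStronglyMeasurable.mul ?_ ?_
      · exact (continuous_fejer.comp (by fun_prop)).aestronglyMeasurable
      · exact ((continuous_charFun.comp (by fun_prop)).div_const _).aestronglyMeasurable
    · filter_upwards [hb, hTpos] with n hn hTn
      refine Eventually.of_forall fun s => ?_
      have hn0 : ‖(2 * Real.pi : ℂ)⁻¹‖ = (2 * Real.pi)⁻¹ := by
        rw [norm_inv, norm_mul, Complex.norm_real, Real.norm_of_nonneg hpi.le]; simp
      have hC : 0 ≤ C * Real.exp (-c * |0|) :=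
        (norm_nonneg _).trans (hn 0 (by simp; positivity))
      have hC' : 0 ≤ C := by simpa using hC
      rw [norm_mul, hn0, norm_mul]
      refine mul_le_mul_of_nonneg_left ?_ (by positivity)
      rcases le_or_gt |s| ((2 * Real.pi + |η|) * T n) with hs | hs
      · exact mul_le_mul (norm_fejer_le _) (hn s hs) (norm_nonneg _) (by norm_num)
      · rw [fejer_eq_zero, norm_zero, zero_mul]
        · positivity
        · rw [abs_div, abs_of_pos (by positivity : 0 < 2 * Real.pi), le_div_iff₀ (by positivity)]
          have h1 : 2 * Real.pi + |η| < |s / T n| := by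
            rw [abs_div, abs_of_pos hTn, lt_div_iff₀ hTn]; exact hs
          have h2 := abs_sub_abs_le_abs_sub (s / T n) η
          rw [abs_sub_comm] at h2
          linarith
    · exact (((integrable_exp_neg_mul_abs hc).const_mul C).const_mul 2).const_mul _
    · refine Eventually.of_forall fun s => Tendsto.const_mul _ (Tendsto.mul ?_ (hlim s))
      refine (continuous_fejer.tendsto _).comp (Tendsto.div_const (Tendsto.sub tendsto_const_nhds ?_) _)
      exact tendsto_const_nhds.div_atTop hT
  refine key.congr' ?_
  filter_upwards [hTpos] with n hn using (integral_fejerKernel_mul_exp_eq (ν n) hn η).symm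

lemma exists_exp_le_mul_fejerKernel : ∃ M : ℝ, 0 < M ∧ ∀ v ≤ 1, Real.exp v ≤ M * fejerKernel v := by
  have hpi := Real.pi_pos
  obtain ⟨B, hB⟩ : ∃ B : ℝ, ∀ v ≤ 1,
      Real.exp v * (2 * (2 * Real.pi * v) ^ 2 + 2 * Real.pi ^ 2) ≤ B := by
    refine ⟨20 * Real.pi ^ 2 * Real.exp 1, fun v hv => ?_⟩
    have h1 : Real.exp v ≤ Real.exp 1 := Real.exp_le_exp.2 hv
    have h2 : 1 ≤ Real.exp 1 := Real.one_le_exp zero_le_one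
    have h3 : Real.exp v * v ^ 2 ≤ 2 * Real.exp 1 := by
      rcases le_total 0 v with h0 | h0
      · have : v ^ 2 ≤ 1 := by nlinarith
        nlinarith [Real.exp_pos v]
      · have h4 := Real.quadratic_le_exp_of_nonneg (neg_nonneg.2 h0)
        have h5 : Real.exp v * Real.exp (-v) = 1 := by rw [← Real.exp_add]; simp
        have h6 : v ^ 2 ≤ 2 * Real.exp (-v) := by nlinarith
        nlinarith [Real.exp_pos v]
    have h7 : Real.exp v * (2 * (2 * Real.pi * v) ^ 2 + 2 * Real.pi ^ 2) =
      Real.pi ^ 2 * (8 * (Real.exp v * v ^ 2) + 2 * Real.exp v) := by ring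
    rw [h7, mul_comm 20, mul_assoc]
    exact mul_le_mul_of_nonneg_left (by linarith) (by positivity)
  have hB0 : 0 ≤ B := le_trans (by positivity) (hB 0 zero_le_one)
  refine ⟨B + 1, by linarith, fun v hv => ?_⟩
  have h1 := four_le_fejerKernel_mul v
  have h2 := hB v hv
  have h3 := fejerKernel_pos v
  have h4 : 0 < 2 * (2 * Real.pi * v) ^ 2 + 2 * Real.pi ^ 2 := by positivity
  have h5 : Real.exp v * 4 ≤ B * fejerKernel v := by
    calc Real.exp v * 4 ≤ Real.exp v *
          (fejerKernel v * (2 * (2 * Real.pi * v) ^ 2 + 2 * Real.pi ^ 2)) :=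
          mul_le_mul_of_nonneg_left h1 (Real.exp_pos v).le
      _ = (Real.exp v * (2 * (2 * Real.pi * v) ^ 2 + 2 * Real.pi ^ 2)) * fejerKernel v := by ring
      _ ≤ _ := mul_le_mul_of_nonneg_right h2 h3.le
  nlinarith [Real.exp_pos v]

/-- A continuous cut-off of the exponential, equal to `exp` on `(-∞, a]` and to `0` on
`[a + ε, ∞)`. -/
def expCutoff (ε a v : ℝ) : ℝ := Real.exp (min v 1) * max 0 (min 1 ((a + ε - v) / ε))

lemma continuous_expCutoff (ε a : ℝ) : Continuous (expCutoff ε a) := by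
  unfold expCutoff; fun_prop

lemma expCutoff_nonneg (ε a v : ℝ) : 0 ≤ expCutoff ε a v :=
  mul_nonneg (Real.exp_pos _).le (le_max_left _ _)

lemma expCutoff_le (ε a v : ℝ) : expCutoff ε a v ≤ Real.exp (min v 1) :=
  mul_le_of_le_one_right (Real.exp_pos _).le (max_le zero_le_one (min_le_left _ _))

lemma expCutoff_eq_zero {ε a v : ℝ} (hε : 0 < ε) (h : a + ε ≤ v) : expCutoff ε a v = 0 := by
  have : (a + ε - v) / ε ≤ 0 := div_nonpos_of_nonpos_of_nonneg (by linarith) hε.le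
  rw [expCutoff, max_eq_left (by exact (min_le_right _ _).trans this), mul_zero]

lemma expCutoff_eq_exp {ε a v : ℝ} (hε : 0 < ε) (ha : a ≤ 1) (h : v ≤ a) :
    expCutoff ε a v = Real.exp v := by
  have : 1 ≤ (a + ε - v) / ε := by rw [le_div_iff₀ hε]; linarith
  rw [expCutoff, min_eq_left this, max_eq_right zero_le_one, mul_one, min_eq_left (h.trans ha)]

lemma expCutoff_le_indicator {ε a : ℝ} (hε : 0 < ε) (ha : a + ε ≤ 1) (v : ℝ) :
    expCutoff ε a v ≤ (Iio (a + ε)).indicator Real.exp v := by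
  rcases lt_or_ge v (a + ε) with h | h
  · rw [indicator_of_mem (mem_Iio.2 h)]
    simpa [min_eq_left (h.le.trans ha)] using expCutoff_le ε a v
  · rw [expCutoff_eq_zero hε h]
    exact indicator_nonneg (fun _ _ => (Real.exp_pos _).le) _

lemma indicator_le_expCutoff {ε a : ℝ} (hε : 0 < ε) (ha : a ≤ 1) (v : ℝ) :
    (Iic a).indicator Real.exp v ≤ expCutoff ε a v := by
  by_cases h : v ≤ a
  · rw [indicator_of_mem (mem_Iic.2 h), expCutoff_eq_exp hε ha h]
  · rw [indicator_of_notMem (by simpa using h)]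
    exact expCutoff_nonneg _ _ _

lemma tendsto_integral_expCutoff {ν : ℕ → Measure ℝ}
    (h : ∀ g : BoundedContinuousFunction ℝ ℝ,
      Tendsto (fun n => ∫ v, fejerKernel v * g v ∂(ν n)) atTop (𝓝 (∫ v, fejerKernel v * g v)))
    {ε a : ℝ} (hε : 0 < ε) (ha : a + ε ≤ 1) :
    Tendsto (fun n => ∫ v, expCutoff ε a v ∂(ν n)) atTop (𝓝 (∫ v, expCutoff ε a v)) := by
  obtain ⟨M, hM, hle⟩ := exists_exp_le_mul_fejerKernel
  let g : BoundedContinuousFunction ℝ ℝ :=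
    BoundedContinuousFunction.ofNormedAddCommGroup (fun v => expCutoff ε a v / fejerKernel v)
      ((continuous_expCutoff ε a).div continuous_fejerKernel fun v => (fejerKernel_pos v).ne') M
      (fun v => by
        rw [Real.norm_of_nonneg (div_nonneg (expCutoff_nonneg _ _ _) (fejerKernel_pos v).le),
          div_le_iff₀ (fejerKernel_pos v)]
        rcases le_total v 1 with h1 | h1
        · exact (expCutoff_le ε a v).trans (by rw [min_eq_left h1]; exact hle v h1)
        · rw [expCutoff_eq_zero hε (ha.trans h1)]
          exact mul_nonneg hM.le (fejerKernel_pos v).le)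
  have e : ∀ v, fejerKernel v * g v = expCutoff ε a v := fun v =>
    mul_div_cancel₀ _ (fejerKernel_pos v).ne'
  simpa only [e] using h g

lemma integrable_expCutoff_of_isFiniteMeasure (ν : Measure ℝ) [IsFiniteMeasure ν] (ε a : ℝ) :
    Integrable (expCutoff ε a) ν :=
  (integrable_const (Real.exp 1)).mono' (continuous_expCutoff ε a).aestronglyMeasurable
    (Eventually.of_forall fun v => by
      rw [Real.norm_of_nonneg (expCutoff_nonneg _ _ _)]
      exact (expCutoff_le _ _ _).trans (Real.exp_le_exp.2 (min_le_right _ _)))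

lemma integrableOn_exp_of_isFiniteMeasure (ν : Measure ℝ) [IsFiniteMeasure ν] {s : Set ℝ}
    (hs : MeasurableSet s) (h : s ⊆ Iic 0) : IntegrableOn Real.exp s ν := by
  refine (integrable_const (1 : ℝ)).mono' Real.continuous_exp.aestronglyMeasurable ?_
  refine (ae_restrict_iff' hs).2 (Eventually.of_forall fun v hv => ?_)
  rw [Real.norm_of_nonneg (Real.exp_pos _).le]
  exact Real.exp_le_one_iff.2 (h hv)

lemma integrable_expCutoff {ε a : ℝ} (hε : 0 < ε) (ha : a + ε ≤ 1) :
    Integrable (expCutoff ε a) :=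
  ((integrable_indicator_iff measurableSet_Iio).2
    ((integrableOn_exp_Iic (a + ε)).mono_set Iio_subset_Iic_self)).mono'
    (continuous_expCutoff ε a).aestronglyMeasurable
    (Eventually.of_forall fun v => by
      rw [Real.norm_of_nonneg (expCutoff_nonneg _ _ _)]
      exact expCutoff_le_indicator hε ha v)

lemma tendsto_of_setIntegral_exp_sandwich {ν : ℕ → Measure ℝ} [∀ n, IsFiniteMeasure (ν n)]
    (h : ∀ g : BoundedContinuousFunction ℝ ℝ,
      Tendsto (fun n => ∫ v, fejerKernel v * g v ∂(ν n)) atTop (𝓝 (∫ v, fejerKernel v * g v)))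
    {b : ℕ → ℝ} (hlow : ∀ᶠ n in atTop, ∫ v in Iio 0, Real.exp v ∂(ν n) ≤ b n)
    (hupp : ∀ᶠ n in atTop, b n ≤ ∫ v in Iic 0, Real.exp v ∂(ν n)) :
    Tendsto b atTop (𝓝 1) := by
  have hup : ∀ ε : ℝ, 0 < ε → ε ≤ 1 → ∀ c, Real.exp ε < c → ∀ᶠ n in atTop, b n < c := by
    intro ε hε hε1 c hc
    have h1 := tendsto_integral_expCutoff h (a := 0) hε (by linarith)
    have h2 : ∫ v, expCutoff ε 0 v ≤ Real.exp ε := by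
      rw [← integral_exp_Iic, integral_Iic_eq_integral_Iio, ← integral_indicator measurableSet_Iio]
      refine integral_mono (integrable_expCutoff hε (by linarith))
        ((integrable_indicator_iff measurableSet_Iio).2
          ((integrableOn_exp_Iic ε).mono_set Iio_subset_Iic_self)) fun v => ?_
      simpa using expCutoff_le_indicator hε (a := 0) (by linarith) v
    filter_upwards [h1.eventually_lt_const (h2.trans_lt hc), hupp] with n hn hn'
    refine lt_of_le_of_lt (hn'.trans ?_) hn
    rw [← integral_indicator measurableSet_Iic]
    exact integral_mono ((integrable_indicator_iff measurableSet_Iic).2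
      (integrableOn_exp_of_isFiniteMeasure _ measurableSet_Iic subset_rfl))
      (integrable_expCutoff_of_isFiniteMeasure _ _ _) (indicator_le_expCutoff hε zero_le_one)
  have hlo : ∀ ε : ℝ, 0 < ε → ε ≤ 1 → ∀ c, c < Real.exp (-ε) → ∀ᶠ n in atTop, c < b n := by
    intro ε hε hε1 c hc
    have h1 := tendsto_integral_expCutoff h (a := -ε) hε (by linarith)
    have h2 : Real.exp (-ε) ≤ ∫ v, expCutoff ε (-ε) v := by
      rw [← integral_exp_Iic, ← integral_indicator measurableSet_Iic]
      exact integral_mono ((integrable_indicator_iff measurableSet_Iic).2 (integrableOn_exp_Iic _))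
        (integrable_expCutoff hε (by linarith)) (indicator_le_expCutoff hε (by linarith))
    filter_upwards [h1.eventually_const_lt (hc.trans_le h2), hlow] with n hn hn'
    refine lt_of_lt_of_le hn (le_trans ?_ hn')
    rw [← integral_indicator measurableSet_Iio]
    refine integral_mono (integrable_expCutoff_of_isFiniteMeasure _ _ _)
      ((integrable_indicator_iff measurableSet_Iio).2
      (integrableOn_exp_of_isFiniteMeasure _ measurableSet_Iio Iio_subset_Iic_self)) fun v => ?_
    simpa using expCutoff_le_indicator hε (a := -ε) (by linarith) v
  have hsmall : ∀ᶠ ε : ℝ in 𝓝[>] 0, 0 < ε ∧ ε ≤ 1 := by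
    filter_upwards [Ioc_mem_nhdsGT (zero_lt_one' ℝ)] with ε hε using hε
  refine tendsto_order.2 ⟨fun c hc => ?_, fun c hc => ?_⟩
  · have h1 : Tendsto (fun ε : ℝ => Real.exp (-ε)) (𝓝[>] 0) (𝓝 1) := by
      have : Tendsto (fun ε : ℝ => Real.exp (-ε)) (𝓝 0) (𝓝 (Real.exp (-0))) :=
        (by fun_prop : Continuous fun ε : ℝ => Real.exp (-ε)).tendsto 0
      rw [neg_zero, Real.exp_zero] at this
      exact this.mono_left nhdsWithin_le_nhds
    obtain ⟨ε, hε, hε1, hε2⟩ := ((h1.eventually_const_lt hc).and hsmall).exists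
    exact hlo ε hε1 hε2 c hε
  · have h1 : Tendsto (fun ε : ℝ => Real.exp ε) (𝓝[>] 0) (𝓝 1) := by
      have := Real.continuous_exp.tendsto 0
      rw [Real.exp_zero] at this
      exact this.mono_left nhdsWithin_le_nhds
    obtain ⟨ε, hε, hε1, hε2⟩ := ((h1.eventually_lt_const hc).and hsmall).exists
    exact hup ε hε1 hε2 c hε

/-- A local limit theorem: if the rescaled characteristic functions of finite measures converge to
a Gaussian with exponential domination on every range `|s| ≤ K * T n`, then the measures behave
like Lebesgue measure when tested against `exp` on the negative half-line. -/
theorem tendsto_of_charFun_gaussian {ν : ℕ → Measure ℝ} [∀ n, IsFiniteMeasure (ν n)]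
    {T : ℕ → ℝ} (hT : Tendsto T atTop atTop)
    (hlim : ∀ s : ℝ, Tendsto (fun n => charFun (ν n) (s / T n) / T n) atTop
      (𝓝 (√(2 * Real.pi) * Real.exp (-(1 / 2) * s ^ 2) : ℝ)))
    (hdom : ∀ K : ℝ, 0 < K → ∃ C c : ℝ, 0 < c ∧ ∀ᶠ n in atTop, ∀ s : ℝ, |s| ≤ K * T n →
      ‖charFun (ν n) (s / T n) / T n‖ ≤ C * Real.exp (-c * |s|))
    {b : ℕ → ℝ} (hlow : ∀ᶠ n in atTop, ∫ v in Iio 0, Real.exp v ∂(ν n) ≤ b n)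
    (hupp : ∀ᶠ n in atTop, b n ≤ ∫ v in Iic 0, Real.exp v ∂(ν n)) :
    Tendsto b atTop (𝓝 1) :=
  tendsto_of_setIntegral_exp_sandwich
    (tendsto_integral_fejerKernel_mul (tendsto_integral_fejerKernel_mul_exp hT hlim hdom)) hlow hupp

lemma mapsTo_ball_of_norm_le {g : ℂ → ℂ} {c : ℂ} {R C B : ℝ} (hB : 0 < B) (hgB : ‖g c‖ ≤ B)
    (hle : ∀ z ∈ Metric.ball c R, ‖g z‖ ≤ C * B) :
    MapsTo g (Metric.ball c R) (Metric.ball (g c) ((C + 2) * B)) := by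
  intro z hz
  rw [mem_ball_iff_norm]
  have := norm_sub_le (g z) (g c)
  have := hle z hz
  nlinarith

lemma norm_sub_le_of_norm_le {g : ℂ → ℂ} {c : ℂ} {R C B : ℝ} (hB : 0 < B)
    (hg : DifferentiableOn ℂ g (Metric.ball c R)) (hgB : ‖g c‖ ≤ B)
    (hle : ∀ z ∈ Metric.ball c R, ‖g z‖ ≤ C * B) {w : ℂ} (hw : ‖w‖ < R) :
    ‖g (c + w) - g c‖ ≤ (C + 2) * B / R * ‖w‖ := by
  have h := Complex.dist_le_div_mul_dist_of_mapsTo_ball hg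
    (mapsTo_ball_of_norm_le hB hgB hle |>.mono_right Metric.ball_subset_closedBall)
    (z := c + w) (by simpa using hw)
  simpa [dist_eq_norm] using h

lemma norm_deriv_le_of_norm_le {g : ℂ → ℂ} {c : ℂ} {R C B : ℝ} (hR : 0 < R) (hB : 0 < B)
    (hg : DifferentiableOn ℂ g (Metric.ball c R)) (hgB : ‖g c‖ ≤ B)
    (hle : ∀ z ∈ Metric.ball c R, ‖g z‖ ≤ C * B) :
    ‖deriv g c‖ ≤ (C + 2) * B / R :=
  Complex.norm_deriv_le_div_of_mapsTo_ball hg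
    (mapsTo_ball_of_norm_le hB hgB hle |>.mono_right Metric.ball_subset_closedBall) hR

/-- Integrating a bound on the derivative over a disc centred at the base point. -/
lemma norm_sub_le_mul_of_norm_deriv_le {g g' : ℂ → ℂ} {c w : ℂ} {M : ℝ}
    (hg : ∀ z ∈ Metric.closedBall c ‖w‖, HasDerivAt g (g' z) z)
    (hle : ∀ z ∈ Metric.closedBall c ‖w‖, ‖g' z‖ ≤ M) {v : ℂ} (hv : ‖v‖ ≤ ‖w‖) :
    ‖g (c + v) - g c‖ ≤ M * ‖v‖ := by
  have h := (convex_closedBall c ‖w‖).norm_image_sub_le_of_norm_hasDerivWithin_le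
    (fun z hz => (hg z hz).hasDerivWithinAt) hle (Metric.mem_closedBall_self (norm_nonneg w))
    (y := c + v) (by simpa using hv)
  simpa using h

lemma norm_taylor_two_sub_le {φ : ℂ → ℂ} {c : ℂ} {R C B : ℝ} (hC : 0 ≤ C) (hB : 0 < B)
    (hφ : DifferentiableOn ℂ φ (Metric.ball c R)) (hgB : ‖iteratedDeriv 2 φ c‖ ≤ B)
    (hle : ∀ z ∈ Metric.ball c R, ‖iteratedDeriv 2 φ z‖ ≤ C * B) {w : ℂ} (hw : ‖w‖ < R) :
    ‖φ (c + w) - φ c - deriv φ c * w - iteratedDeriv 2 φ c * w ^ 2 / 2‖ ≤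
      (C + 2) * B / R * ‖w‖ ^ 3 := by
  have h2 : iteratedDeriv 2 φ = deriv (deriv φ) := by
    rw [iteratedDeriv_succ, iteratedDeriv_one]
  rw [h2] at hgB ⊢
  simp only [h2] at hle
  have hR : 0 < R := (norm_nonneg w).trans_lt hw
  have hd1 : DifferentiableOn ℂ (deriv φ) (Metric.ball c R) := hφ.deriv Metric.isOpen_ball
  have hd2 := hd1.deriv Metric.isOpen_ball
  have hsub : Metric.closedBall c ‖w‖ ⊆ Metric.ball c R := Metric.closedBall_subset_ball hw
  set M := (C + 2) * B / R * ‖w‖ with hM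
  have hM0 : 0 ≤ M := by positivity
  have b0 : ∀ z ∈ Metric.closedBall c ‖w‖, ‖deriv (deriv φ) z - deriv (deriv φ) c‖ ≤ M := by
    intro z hz
    have h3 := norm_sub_le_of_norm_le hB hd2 hgB hle (w := z - c)
      (by simpa [dist_eq_norm] using hsub hz)
    rw [add_sub_cancel] at h3
    exact h3.trans (mul_le_mul_of_nonneg_left (mem_closedBall_iff_norm.1 hz) (by positivity))
  have b1 : ∀ z ∈ Metric.closedBall c ‖w‖,
      ‖deriv φ z - deriv φ c - deriv (deriv φ) c * (z - c)‖ ≤ M * ‖w‖ := by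
    intro z hz
    have hz' := mem_closedBall_iff_norm.1 hz
    have h3 := norm_sub_le_mul_of_norm_deriv_le (c := c) (w := w) (M := M)
      (g := fun z => deriv φ z - deriv (deriv φ) c * (z - c))
      (g' := fun z => deriv (deriv φ) z - deriv (deriv φ) c) (fun u hu => by
        have h4 := (hd1.differentiableAt (Metric.isOpen_ball.mem_nhds (hsub hu))).hasDerivAt
        have h5 := ((hasDerivAt_id u).sub_const c).const_mul (deriv (deriv φ) c)
        exact (h4.sub h5).congr_deriv (by simp)) b0 (v := z - c) hz'
    simp only [add_sub_cancel, sub_self, mul_zero, sub_zero] at h3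
    rw [sub_right_comm] at h3
    exact h3.trans (mul_le_mul_of_nonneg_left hz' hM0)
  have h3 := norm_sub_le_mul_of_norm_deriv_le (c := c) (w := w) (M := M * ‖w‖)
      (g := fun z => φ z - deriv φ c * (z - c) - deriv (deriv φ) c * (z - c) ^ 2 / 2)
      (g' := fun z => deriv φ z - deriv φ c - deriv (deriv φ) c * (z - c)) (fun u hu => by
        have h4 := (hφ.differentiableAt (Metric.isOpen_ball.mem_nhds (hsub hu))).hasDerivAt
        have h5 := ((hasDerivAt_id u).sub_const c).const_mul (deriv φ c)
        have h6 := ((((hasDerivAt_id u).sub_const c).pow 2).const_mul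
          (deriv (deriv φ) c)).div_const 2
        refine ((h4.sub h5).sub h6).congr_deriv ?_
        simp
        ring) b1 (v := w) le_rfl
  simp only [add_sub_cancel_left, sub_self, mul_zero, sub_zero] at h3
  have e1 : φ (c + w) - φ c - deriv φ c * w - deriv (deriv φ) c * w ^ 2 / 2 =
    φ (c + w) - deriv φ c * w - deriv (deriv φ) c * w ^ 2 / 2 -
      (φ c - deriv (deriv φ) c * 0 ^ 2 / 2) := by ring
  rw [e1]
  exact h3.trans_eq (by rw [hM]; ring)

/-- Normalised data for Ingham's theorem near the origin: `F` and `X` are the restrictions of `φ`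
and `χ` to the positive real axis, `p = -F'` and `q = F''`, with the holomorphy and growth
conditions on the discs `|z - t| < δ t`. -/
structure InghamData (φ χ : ℂ → ℂ) (δ F X p q : ℝ → ℝ) (t₀ C : ℝ) : Prop where
  t₀_pos : 0 < t₀
  one_le : 1 ≤ C
  δ_pos : ∀ t, 0 < t → t < t₀ → 0 < δ t
  δ_le : ∀ t, 0 < t → t < t₀ → δ t ≤ t
  δ_lip : ∀ s t, 0 < t → t < t₀ → 0 < s → s < t₀ → δ t ≤ δ s + |s - t|
  δ_cont : ContinuousOn δ (Ioo 0 t₀)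
  φ_diff : ∀ t : ℝ, 0 < t → t < t₀ → DifferentiableOn ℂ φ (Metric.ball (t : ℂ) (δ t))
  χ_diff : ∀ t : ℝ, 0 < t → t < t₀ → DifferentiableOn ℂ χ (Metric.ball (t : ℂ) (δ t))
  φ_eq : ∀ t : ℝ, 0 < t → t < t₀ → φ t = F t
  χ_eq : ∀ t : ℝ, 0 < t → t < t₀ → χ t = X t
  deriv_φ : ∀ t : ℝ, 0 < t → t < t₀ → deriv φ t = -p t
  deriv_two_φ : ∀ t : ℝ, 0 < t → t < t₀ → iteratedDeriv 2 φ t = q t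
  X_pos : ∀ t, 0 < t → t < t₀ → 0 < X t
  p_pos : ∀ t, 0 < t → t < t₀ → 0 < p t
  q_pos : ∀ t, 0 < t → t < t₀ → 0 < q t
  q_cont : ContinuousOn q (Ioo 0 t₀)
  bound_φ : ∀ t : ℝ, 0 < t → t < t₀ → ∀ z ∈ Metric.ball (t : ℂ) (δ t),
    ‖iteratedDeriv 2 φ z‖ ≤ C * q t
  bound_χ : ∀ t : ℝ, 0 < t → t < t₀ → ∀ z ∈ Metric.ball (t : ℂ) (δ t), ‖χ z‖ ≤ C * X t
  hasDerivAt_F : ∀ t, 0 < t → t < t₀ → HasDerivAt F (-p t) t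
  hasDerivAt_p : ∀ t, 0 < t → t < t₀ → HasDerivAt p (-q t) t
  hasDerivAt_X : ∀ t : ℝ, 0 < t → t < t₀ → HasDerivAt X (deriv χ t).re t

namespace InghamData

variable {φ χ : ℂ → ℂ} {δ F X p q : ℝ → ℝ} {t₀ C : ℝ}

lemma exists_slope_p (S : InghamData φ χ δ F X p q t₀ C) {t s : ℝ} (ht : 0 < t) (hts : t < s)
    (hs : s < t₀) : ∃ ξ ∈ Ioo t s, p t - p s = q ξ * (s - t) := by
  obtain ⟨ξ, hξ, h⟩ := exists_hasDerivAt_eq_slope p (fun ξ => -q ξ) hts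
    (fun x hx => (S.hasDerivAt_p x (ht.trans_le hx.1) (hx.2.trans_lt hs)).continuousAt.continuousWithinAt)
    (fun x hx => S.hasDerivAt_p x (ht.trans hx.1) (hx.2.trans hs))
  refine ⟨ξ, hξ, ?_⟩
  rw [eq_div_iff (by linarith)] at h
  linarith

lemma exists_slope_F (S : InghamData φ χ δ F X p q t₀ C) {t s : ℝ} (ht : 0 < t) (hts : t < s)
    (hs : s < t₀) : ∃ ξ ∈ Ioo t s, F t - F s = p ξ * (s - t) := by
  obtain ⟨ξ, hξ, h⟩ := exists_hasDerivAt_eq_slope F (fun ξ => -p ξ) hts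
    (fun x hx => (S.hasDerivAt_F x (ht.trans_le hx.1) (hx.2.trans_lt hs)).continuousAt.continuousWithinAt)
    (fun x hx => S.hasDerivAt_F x (ht.trans hx.1) (hx.2.trans hs))
  refine ⟨ξ, hξ, ?_⟩
  rw [eq_div_iff (by linarith)] at h
  linarith

lemma F_antitone (S : InghamData φ χ δ F X p q t₀ C) {t s : ℝ} (ht : 0 < t) (hts : t ≤ s)
    (hs : s < t₀) : F s ≤ F t := by
  rcases hts.eq_or_lt with rfl | hts
  · rfl
  · obtain ⟨ξ, hξ, h⟩ := S.exists_slope_F ht hts hs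
    nlinarith [S.p_pos ξ (ht.trans hξ.1) (hξ.2.trans hs)]

lemma q_le (S : InghamData φ χ δ F X p q t₀ C) {t s : ℝ} (ht : 0 < t) (ht' : t < t₀) (hs : 0 < s)
    (hs' : s < t₀) (h : |s - t| < δ t) : q s ≤ C * q t := by
  have h1 := S.bound_φ t ht ht' (s : ℂ) (by
    rw [mem_ball_iff_norm, ← Complex.ofReal_sub, Complex.norm_real]; exact h)
  rwa [S.deriv_two_φ s hs hs', Complex.norm_real, Real.norm_of_nonneg (S.q_pos s hs hs').le] at h1

lemma X_le (S : InghamData φ χ δ F X p q t₀ C) {t s : ℝ} (ht : 0 < t) (ht' : t < t₀) (hs : 0 < s)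
    (hs' : s < t₀) (h : |s - t| < δ t) : X s ≤ C * X t := by
  have h1 := S.bound_χ t ht ht' (s : ℂ) (by
    rw [mem_ball_iff_norm, ← Complex.ofReal_sub, Complex.norm_real]; exact h)
  rwa [S.χ_eq s hs hs', Complex.norm_real, Real.norm_of_nonneg (S.X_pos s hs hs').le] at h1

lemma q_mul_δ_le (S : InghamData φ χ δ F X p q t₀ C) {t : ℝ} (ht : 0 < t) (ht' : 2 * t < t₀) :
    q t * δ t ≤ 3 * C * p t := by
  have ht0 : t < t₀ := by linarith
  have hδ := S.δ_pos t ht ht0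
  have hδ' := S.δ_le t ht ht0
  obtain ⟨ξ, hξ, h⟩ := S.exists_slope_p ht (by linarith : t < t + δ t / 3) (by linarith)
  have hξ0 : 0 < ξ := ht.trans hξ.1
  have hξ1 : ξ < t₀ := by linarith [hξ.2]
  have h1 := S.δ_lip ξ t ht ht0 hξ0 hξ1
  have h2 : |ξ - t| < δ t / 3 := by rw [abs_of_pos (by linarith [hξ.1])]; linarith [hξ.2]
  have h3 := S.q_le hξ0 hξ1 ht ht0 (by rw [abs_sub_comm]; linarith)
  have h4 := S.p_pos (t + δ t / 3) (by linarith) (by linarith)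
  have h5 := S.one_le
  have h6 : q t * δ t ≤ C * q ξ * δ t := mul_le_mul_of_nonneg_right h3 hδ.le
  have h7 : C * q ξ * δ t = 3 * C * (p t - p (t + δ t / 3)) := by rw [h]; ring
  rw [h7] at h6
  nlinarith

lemma half_p_le (S : InghamData φ χ δ F X p q t₀ C) {t s : ℝ} (ht : 0 < t) (ht' : 2 * t < t₀)
    (hts : t < s) (hs : s ≤ t + δ t / (6 * C ^ 2)) : p t / 2 ≤ p s := by
  have ht0 : t < t₀ := by linarith
  have hC := S.one_le
  have hδ := S.δ_pos t ht ht0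
  have hδ' := S.δ_le t ht ht0
  have h1 : δ t / (6 * C ^ 2) < δ t := div_lt_self hδ (by nlinarith)
  obtain ⟨ξ, hξ, h⟩ := S.exists_slope_p ht hts (by linarith)
  have h2 := S.q_le ht ht0 (ht.trans hξ.1) (by linarith [hξ.2])
    (by rw [abs_of_pos (by linarith [hξ.1])]; linarith [hξ.2])
  have h3 := S.q_mul_δ_le ht ht'
  have h4 : q ξ * (s - t) ≤ C * q t * (δ t / (6 * C ^ 2)) :=
    mul_le_mul h2 (by linarith) (by linarith) (by have := S.q_pos t ht ht0; positivity)
  have h5 : C * q t * (δ t / (6 * C ^ 2)) = q t * δ t / (6 * C) := by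
    field_simp
  have h6 : q t * δ t / (6 * C) ≤ p t / 2 := by
    rw [div_le_div_iff₀ (by positivity) (by norm_num)]; nlinarith
  linarith

lemma min_mul_le_sub (S : InghamData φ χ δ F X p q t₀ C) {t r : ℝ} (ht : 0 < t) (ht' : 2 * t < t₀)
    (htr : t < r) (hr : r < t₀) :
    p t / 2 * min (r - t) (δ t / (6 * C ^ 2)) ≤ F t - F r := by
  have ht0 : t < t₀ := by linarith
  have hC := S.one_le
  have hδ := S.δ_pos t ht ht0
  set m := min (r - t) (δ t / (6 * C ^ 2)) with hm
  have hm0 : 0 < m := lt_min (by linarith) (by positivity)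
  have hm1 : m ≤ r - t := min_le_left _ _
  have hm2 : m ≤ δ t / (6 * C ^ 2) := min_le_right _ _
  obtain ⟨ξ, hξ, h⟩ := S.exists_slope_F ht (by linarith : t < t + m) (by linarith)
  have h1 := S.half_p_le ht ht' hξ.1 (by linarith [hξ.2])
  have h2 := S.F_antitone (by linarith : 0 < t + m) (by linarith : t + m ≤ r) hr
  nlinarith

lemma exists_mul_le_sub (S : InghamData φ χ δ F X p q t₀ C) {b K : ℝ} (hb : 0 < b) (hK : 0 < K) :
    ∃ c : ℝ, 0 < c ∧ ∀ t y : ℝ, 0 < t → 2 * t < t₀ → b * δ t ≤ |y| → |y| ≤ K * t →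
      √(t ^ 2 + y ^ 2) < t₀ → c * (δ t * p t / t * |y|) ≤ F t - F √(t ^ 2 + y ^ 2) := by
  have hC := S.one_le
  have hm : 0 < min (b / (K + 2)) (1 / (6 * C ^ 2 * K)) := by
    refine lt_min ?_ ?_ <;> positivity
  refine ⟨min (b / (K + 2)) (1 / (6 * C ^ 2 * K)) / 2, by positivity, ?_⟩
  intro t y ht ht' hy1 hy2 hr
  have ht0 : t < t₀ := by linarith
  have hδ := S.δ_pos t ht ht0
  have hp := S.p_pos t ht ht0
  have hy : 0 < |y| := lt_of_lt_of_le (by positivity) hy1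
  set r := √(t ^ 2 + y ^ 2) with hrdef
  have hr2 : r ^ 2 = t ^ 2 + y ^ 2 := Real.sq_sqrt (by positivity)
  have hr0 : 0 ≤ r := Real.sqrt_nonneg _
  have htr : t < r := by
    rw [← sq_abs y] at hr2
    nlinarith
  have hrle : r ≤ t + |y| := by
    rw [← sq_abs y] at hr2
    nlinarith
  have h1 := S.min_mul_le_sub ht ht' htr hr
  refine le_trans ?_ h1
  have h2 : min (b / (K + 2)) (1 / (6 * C ^ 2 * K)) * (δ t / t * |y|) ≤
      min (r - t) (δ t / (6 * C ^ 2)) := by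
    refine le_min ?_ ?_
    · have e : r - t = |y| * |y| / (r + t) := by
        rw [eq_div_iff (by linarith), abs_mul_abs_self]; nlinarith
      calc min (b / (K + 2)) (1 / (6 * C ^ 2 * K)) * (δ t / t * |y|)
          ≤ b / (K + 2) * (δ t / t * |y|) :=
            mul_le_mul_of_nonneg_right (min_le_left _ _) (by positivity)
        _ = (b * δ t) * |y| / ((K + 2) * t) := by field_simp
        _ ≤ |y| * |y| / (r + t) := by
            gcongr
            linarith
        _ = r - t := e.symm
    · calc min (b / (K + 2)) (1 / (6 * C ^ 2 * K)) * (δ t / t * |y|)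
          ≤ 1 / (6 * C ^ 2 * K) * (δ t / t * |y|) :=
            mul_le_mul_of_nonneg_right (min_le_right _ _) (by positivity)
        _ ≤ 1 / (6 * C ^ 2 * K) * (δ t / t * (K * t)) := by gcongr
        _ = δ t / (6 * C ^ 2) := by field_simp
  calc min (b / (K + 2)) (1 / (6 * C ^ 2 * K)) / 2 * (δ t * p t / t * |y|)
      = p t / 2 * (min (b / (K + 2)) (1 / (6 * C ^ 2 * K)) * (δ t / t * |y|)) := by ring
    _ ≤ _ := mul_le_mul_of_nonneg_left h2 (by positivity)

lemma norm_χ_sub_le (S : InghamData φ χ δ F X p q t₀ C) {t : ℝ} (ht : 0 < t) (ht' : t < t₀) {w : ℂ}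
    (hw : ‖w‖ < δ t) : ‖χ (t + w) - X t‖ ≤ (C + 2) * X t / δ t * ‖w‖ := by
  have h := norm_sub_le_of_norm_le (S.X_pos t ht ht') (S.χ_diff t ht ht')
    (by rw [S.χ_eq t ht ht', Complex.norm_real, Real.norm_of_nonneg (S.X_pos t ht ht').le])
    (S.bound_χ t ht ht') hw
  rwa [S.χ_eq t ht ht'] at h

lemma norm_φ_sub_le (S : InghamData φ χ δ F X p q t₀ C) {t : ℝ} (ht : 0 < t) (ht' : t < t₀) {w : ℂ}
    (hw : ‖w‖ < δ t) :
    ‖φ (t + w) - F t + p t * w - q t * w ^ 2 / 2‖ ≤ (C + 2) * q t / δ t * ‖w‖ ^ 3 := by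
  have h := norm_taylor_two_sub_le (zero_le_one.trans S.one_le) (S.q_pos t ht ht') (S.φ_diff t ht ht')
    (by rw [S.deriv_two_φ t ht ht', Complex.norm_real, Real.norm_of_nonneg (S.q_pos t ht ht').le])
    (S.bound_φ t ht ht') hw
  rwa [S.φ_eq t ht ht', S.deriv_φ t ht ht', S.deriv_two_φ t ht ht', neg_mul, sub_neg_eq_add] at h

lemma abs_deriv_X_le (S : InghamData φ χ δ F X p q t₀ C) {t : ℝ} (ht : 0 < t) (ht' : t < t₀) :
    |(deriv χ t).re| ≤ (C + 2) * X t / δ t :=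
  (Complex.abs_re_le_norm _).trans <| norm_deriv_le_of_norm_le (S.δ_pos t ht ht')
    (S.X_pos t ht ht') (S.χ_diff t ht ht')
    (by rw [S.χ_eq t ht ht', Complex.norm_real, Real.norm_of_nonneg (S.X_pos t ht ht').le])
    (S.bound_χ t ht ht')

/-- Control of the real part of `φ` on a vertical segment through `t`. -/
lemma abs_re_φ_sub_le (S : InghamData φ χ δ F X p q t₀ C) {t y : ℝ} (ht : 0 < t) (ht' : t < t₀)
    (hy : |y| ≤ 1 / (4 * (C + 2)) * δ t) :
    |(φ (t + y * Complex.I)).re - F t + q t * y ^ 2 / 2| ≤ q t * y ^ 2 / 4 := by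
  have hC := S.one_le
  have hδ := S.δ_pos t ht ht'
  have hq := S.q_pos t ht ht'
  have hn : ‖(y * Complex.I : ℂ)‖ = |y| := by simp
  have hlt : |y| < δ t := by
    refine hy.trans_lt ?_
    rw [one_div, inv_mul_lt_iff₀ (by positivity)]
    nlinarith
  have h := S.norm_φ_sub_le ht ht' (w := y * Complex.I) (by rwa [hn])
  have h1 := (Complex.abs_re_le_norm _).trans h
  have e1 : (φ (t + y * Complex.I) - F t + p t * (y * Complex.I) -
      q t * (y * Complex.I) ^ 2 / 2).re = (φ (t + y * Complex.I)).re - F t + q t * y ^ 2 / 2 := by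
    have : (q t : ℂ) * (y * Complex.I) ^ 2 / 2 = ((-(q t * y ^ 2 / 2) : ℝ) : ℂ) := by
      rw [mul_pow, Complex.I_sq]; push_cast; ring
    rw [this]
    simp [-Complex.ofReal_pow]
  rw [e1, hn] at h1
  refine h1.trans ?_
  have e2 : (C + 2) * q t / δ t * |y| ^ 3 = (C + 2) * q t / δ t * y ^ 2 * |y| := by
    rw [← sq_abs y]; ring
  rw [e2]
  calc (C + 2) * q t / δ t * y ^ 2 * |y|
      ≤ (C + 2) * q t / δ t * y ^ 2 * (1 / (4 * (C + 2)) * δ t) := by gcongr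
    _ = q t * y ^ 2 / 4 := by field_simp

lemma norm_χ_mem_Icc (S : InghamData φ χ δ F X p q t₀ C) {t y : ℝ} (ht : 0 < t) (ht' : t < t₀)
    (hy : |y| ≤ 1 / (4 * (C + 2)) * δ t) :
    X t / 2 ≤ ‖χ (t + y * Complex.I)‖ ∧ ‖χ (t + y * Complex.I)‖ ≤ 3 / 2 * X t := by
  have hC := S.one_le
  have hδ := S.δ_pos t ht ht'
  have hX := S.X_pos t ht ht'
  have hn : ‖(y * Complex.I : ℂ)‖ = |y| := by simp
  have hlt : |y| < δ t := by
    refine hy.trans_lt ?_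
    rw [one_div, inv_mul_lt_iff₀ (by positivity)]
    nlinarith
  have h := S.norm_χ_sub_le ht ht' (w := y * Complex.I) (by rwa [hn])
  rw [hn] at h
  have h1 : (C + 2) * X t / δ t * |y| ≤ X t / 2 := by
    calc (C + 2) * X t / δ t * |y| ≤ (C + 2) * X t / δ t * (1 / (4 * (C + 2)) * δ t) := by gcongr
      _ = X t / 4 := by field_simp
      _ ≤ X t / 2 := by linarith
  have hXn : ‖(X t : ℂ)‖ = X t := by rw [Complex.norm_real, Real.norm_of_nonneg hX.le]
  have h2 := norm_sub_norm_le (X t : ℂ) (χ (t + y * Complex.I))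
  rw [norm_sub_rev, hXn] at h2
  have h3 := norm_sub_norm_le (χ (t + y * Complex.I)) (X t : ℂ)
  rw [hXn] at h3
  constructor <;> linarith

end InghamData

/-- A function `f` which is asymptotic to `χ * exp φ` near the origin on the discs of
`InghamData`, and which is of order `χ |z| * exp (φ |z|)` in Stolz angles. -/
structure InghamTransform (f φ χ : ℂ → ℂ) (δ F X p q : ℝ → ℝ) (t₀ C : ℝ) : Prop
    extends InghamData φ χ δ F X p q t₀ C where
  tendsto_mul_p : Tendsto (fun t => t * p t) (𝓝[>] 0) atTop
  tendsto_δ_mul_p_div : Tendsto (fun t => δ t * p t / (t * √(q t))) (𝓝[>] 0) atTop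
  norm_div_sub_one_lt : ∀ ε : ℝ, 0 < ε → ∀ᶠ t : ℝ in 𝓝[>] 0, ∀ w : ℂ, ‖w‖ < δ t →
    ‖f (t + w) / (χ (t + w) * Complex.exp (φ (t + w))) - 1‖ < ε
  norm_le : ∀ K : ℝ, 0 < K → ∃ B : ℝ, 0 < B ∧ ∀ᶠ t : ℝ in 𝓝[>] 0, ∀ y : ℝ, |y| ≤ K * t →
    ‖f (t + y * Complex.I)‖ ≤ B * X √(t ^ 2 + y ^ 2) * Real.exp (F √(t ^ 2 + y ^ 2))

namespace InghamTransform

variable {f φ χ : ℂ → ℂ} {δ F X p q : ℝ → ℝ} {t₀ C : ℝ}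

lemma eventually_mem {c : ℝ} (hc : 0 < c) : ∀ᶠ t : ℝ in 𝓝[>] 0, 0 < t ∧ t < c :=
  Ioo_mem_nhdsGT hc

lemma norm_near (S : InghamTransform f φ χ δ F X p q t₀ C) :
    ∀ᶠ t : ℝ in 𝓝[>] 0, ∀ y : ℝ, |y| ≤ 1 / (4 * (C + 2)) * δ t →
      X t / 4 * Real.exp (F t - 3 / 4 * (q t * y ^ 2)) ≤ ‖f (t + y * Complex.I)‖ ∧
      ‖f (t + y * Complex.I)‖ ≤ 9 / 4 * X t * Real.exp (F t - q t * y ^ 2 / 4) := by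
  filter_upwards [S.norm_div_sub_one_lt (1 / 2) (by norm_num), eventually_mem S.t₀_pos]
    with t h1 ⟨ht, ht0⟩ y hy
  have hC := S.one_le
  have hδ := S.δ_pos t ht ht0
  have hX := S.X_pos t ht ht0
  have hlt : ‖(y * Complex.I : ℂ)‖ < δ t := by
    have hn : ‖(y * Complex.I : ℂ)‖ = |y| := by simp
    rw [hn]
    refine hy.trans_lt ?_
    rw [one_div, inv_mul_lt_iff₀ (by positivity)]
    nlinarith
  have h2 := h1 _ hlt
  obtain ⟨h3, h4⟩ := S.norm_χ_mem_Icc ht ht0 hy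
  have h5 := abs_le.1 (S.abs_re_φ_sub_le ht ht0 hy)
  set z : ℂ := t + y * Complex.I
  have hχ0 : χ z ≠ 0 := norm_pos_iff.1 (by linarith)
  set g : ℂ := f z / (χ z * Complex.exp (φ z)) with hg
  have hf : f z = g * (χ z * Complex.exp (φ z)) :=
    (div_mul_cancel₀ _ (mul_ne_zero hχ0 (Complex.exp_ne_zero _))).symm
  have hg1 : 1 / 2 ≤ ‖g‖ := by
    have := norm_sub_norm_le (1 : ℂ) g
    rw [norm_sub_rev, norm_one] at this
    linarith
  have hg2 : ‖g‖ ≤ 3 / 2 := by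
    have := norm_sub_norm_le g (1 : ℂ)
    rw [norm_one] at this
    linarith
  rw [hf, norm_mul, norm_mul, Complex.norm_exp]
  constructor
  · calc X t / 4 * Real.exp (F t - 3 / 4 * (q t * y ^ 2))
        = 1 / 2 * (X t / 2 * Real.exp (F t - 3 / 4 * (q t * y ^ 2))) := by ring
      _ ≤ ‖g‖ * (‖χ z‖ * Real.exp (φ z).re) := by
        gcongr
        linarith
  · calc ‖g‖ * (‖χ z‖ * Real.exp (φ z).re)
        ≤ 3 / 2 * (3 / 2 * X t * Real.exp (F t - q t * y ^ 2 / 4)) := by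
          gcongr
          linarith
      _ = _ := by ring

lemma eventually_gap (S : InghamTransform f φ χ δ F X p q t₀ C) {M : ℝ} :
    ∀ᶠ t : ℝ in 𝓝[>] 0, 1 ≤ √(q t) * δ t → M < √(q t) * δ t := by
  have hC := S.one_le
  set b : ℝ := 1 / (4 * (C + 2)) with hb
  have hb0 : 0 < b := by positivity
  have hb1 : b ≤ 1 := by
    rw [hb, div_le_one (by positivity)]; linarith
  obtain ⟨c, hc, hsub⟩ := S.exists_mul_le_sub hb0 one_pos
  obtain ⟨B, hB, hfar⟩ := S.norm_le 1 one_pos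
  filter_upwards [S.norm_near, hfar, eventually_mem (half_pos S.t₀_pos),
    S.tendsto_δ_mul_p_div.eventually_gt_atTop
      ((Real.log (4 * (B * C)) + 3 / 4 * b ^ 2 * M ^ 2) / (c * b)),
    S.tendsto_δ_mul_p_div.eventually_gt_atTop 0]
    with t h1 h2 ⟨ht, ht2⟩ h3 h3' hY1
  by_contra! hYM
  have ht0 : t < t₀ := by linarith [S.t₀_pos]
  have hδ := S.δ_pos t ht ht0
  have hδt := S.δ_le t ht ht0
  have hX := S.X_pos t ht ht0
  have hq := S.q_pos t ht ht0
  have hp := S.p_pos t ht ht0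
  have hσ : 0 < √(q t) := Real.sqrt_pos.2 hq
  have hσ2 : √(q t) ^ 2 = q t := Real.sq_sqrt hq.le
  have hbδ : b * δ t ≤ δ t := by nlinarith
  have habs : |b * δ t| = b * δ t := abs_of_pos (by positivity)
  have h4 := (h1 (b * δ t) habs.le).1
  have h5 := h2 (b * δ t) (by rw [habs]; linarith)
  set r := √(t ^ 2 + (b * δ t) ^ 2) with hr
  have hr2 : r ^ 2 = t ^ 2 + (b * δ t) ^ 2 := Real.sq_sqrt (by positivity)
  have hbδ0 : 0 < b * δ t := by positivity
  have htr : t < r := Real.lt_sqrt_of_sq_lt (by nlinarith)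
  have hrt : r < t + b * δ t := by
    rw [hr, Real.sqrt_lt' (by positivity)]; nlinarith
  have h6 := hsub t (b * δ t) ht (by linarith) habs.ge (by rw [habs]; linarith) (by linarith)
  have h7 := S.X_le ht ht0 (ht.trans htr) (by linarith)
    (by rw [abs_of_pos (by linarith)]; linarith)
  rw [habs] at h6
  have h8 : X t / 4 * Real.exp (F t - 3 / 4 * (q t * (b * δ t) ^ 2)) ≤
      B * (C * X t) * Real.exp (F t - c * (δ t * p t / t * (b * δ t))) := by
    refine h4.trans (h5.trans ?_)
    gcongr
    linarith
  have h9 : Real.exp (c * (δ t * p t / t * (b * δ t)) - 3 / 4 * (q t * (b * δ t) ^ 2)) ≤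
      4 * (B * C) := by
    have e : Real.exp (c * (δ t * p t / t * (b * δ t)) - 3 / 4 * (q t * (b * δ t) ^ 2)) =
        Real.exp (F t - 3 / 4 * (q t * (b * δ t) ^ 2)) /
          Real.exp (F t - c * (δ t * p t / t * (b * δ t))) := by
      rw [← Real.exp_sub]; ring_nf
    rw [e, div_le_iff₀ (Real.exp_pos _)]
    refine le_of_mul_le_mul_left ?_ (show 0 < X t / 4 by positivity)
    calc _ ≤ _ := h8
      _ = _ := by ring
  rw [← Real.le_log_iff_exp_le (by positivity)] at h9
  have e1 : δ t * p t / t * (b * δ t) = b * (δ t * p t / (t * √(q t)) * (√(q t) * δ t)) := by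
    field_simp
  have e2 : q t * (b * δ t) ^ 2 = b ^ 2 * (√(q t) * δ t) ^ 2 := by
    rw [mul_pow (√(q t)), hσ2]; ring
  rw [e1, e2] at h9
  rw [div_lt_iff₀ (by positivity)] at h3
  set L := δ t * p t / (t * √(q t))
  set Y := √(q t) * δ t
  have h10 : L * 1 ≤ L * Y := mul_le_mul_of_nonneg_left hY1 h3'.le
  have h11 : Y ^ 2 ≤ M ^ 2 := by gcongr
  have h12 : b ^ 2 * Y ^ 2 ≤ b ^ 2 * M ^ 2 := by gcongr
  have h13 : c * b * (L * 1) ≤ c * b * (L * Y) := by gcongr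
  linarith

/-- `t * p t` cannot be increasing near the origin. -/
lemma exists_p_le (S : InghamTransform f φ χ δ F X p q t₀ C) {t₁ : ℝ} (ht₁ : 0 < t₁)
    (h₁ : t₁ ≤ t₀) : ∃ t ∈ Ioo 0 t₁, p t ≤ t * q t := by
  by_contra! hcon
  have hder : ∀ t ∈ Ioo 0 t₁, HasDerivAt (fun t => t * p t) (1 * p t + t * (-q t)) t := fun t ht =>
    (hasDerivAt_id t).mul (S.hasDerivAt_p t ht.1 (ht.2.trans_le h₁))
  have hmono : MonotoneOn (fun t => t * p t) (Ioo 0 t₁) := by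
    refine monotoneOn_of_deriv_nonneg (convex_Ioo _ _)
      (fun t ht => (hder t ht).continuousAt.continuousWithinAt) ?_ ?_
    · rw [interior_Ioo]
      exact fun t ht => (hder t ht).differentiableAt.differentiableWithinAt
    · rw [interior_Ioo]
      intro t ht
      rw [(hder t ht).deriv]
      linarith [hcon t ht]
  obtain ⟨t, h1, h2, h3⟩ := ((S.tendsto_mul_p.eventually_gt_atTop (t₁ / 2 * p (t₁ / 2))).and
    (eventually_mem (half_pos ht₁))).exists
  have := hmono (show t ∈ Ioo 0 t₁ from ⟨h2, by linarith⟩)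
    (show t₁ / 2 ∈ Ioo 0 t₁ from ⟨by linarith, by linarith⟩) h3.le
  simp only at this
  linarith

lemma tendsto_sqrt_mul_δ (S : InghamTransform f φ χ δ F X p q t₀ C) :
    Tendsto (fun t => √(q t) * δ t) (𝓝[>] 0) atTop := by
  rw [tendsto_atTop]
  intro M'
  set M := max M' 1 with hM
  have hM1 : 1 ≤ M := le_max_right _ _
  have hev := (S.eventually_gap (M := M)).and ((eventually_mem S.t₀_pos).and
    (S.tendsto_δ_mul_p_div.eventually_ge_atTop M))
  obtain ⟨t₁, ht₁, hsub⟩ := mem_nhdsGT_iff_exists_Ioo_subset.1 hev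
  have ht₁' : (0 : ℝ) < t₁ := ht₁
  obtain ⟨t₂, ht₂, hpq⟩ := S.exists_p_le (lt_min ht₁' S.t₀_pos) (min_le_right _ _)
  have ht₂' : t₂ ∈ Ioo 0 t₁ := ⟨ht₂.1, ht₂.2.trans_le (min_le_left _ _)⟩
  have ht₂0 : t₂ < t₀ := ht₂.2.trans_le (min_le_right _ _)
  obtain ⟨hgap, -, hL⟩ := hsub ht₂'
  have hq := S.q_pos t₂ ht₂.1 ht₂0
  have hδ := S.δ_pos t₂ ht₂.1 ht₂0
  have hLY : δ t₂ * p t₂ / (t₂ * √(q t₂)) ≤ √(q t₂) * δ t₂ := by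
    rw [div_le_iff₀ (mul_pos ht₂.1 (Real.sqrt_pos.2 hq))]
    calc δ t₂ * p t₂ ≤ δ t₂ * (t₂ * q t₂) := by gcongr
      _ = δ t₂ * (t₂ * (√(q t₂) * √(q t₂))) := by rw [Real.mul_self_sqrt hq.le]
      _ = _ := by ring
  have hY₂ : M < √(q t₂) * δ t₂ := hgap (by linarith)
  filter_upwards [Ioo_mem_nhdsGT ht₁'] with t ht
  refine (le_max_left _ _).trans (le_of_lt ?_ : M ≤ _)
  refine (hsub ht).1 ?_
  by_contra! hlt
  have hcont : ContinuousOn (fun t => √(q t) * δ t) (Ioo 0 t₁) := by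
    have hss : Ioo 0 t₁ ⊆ Ioo 0 t₀ := fun s hs => (hsub hs).2.1
    exact (S.q_cont.mono hss).sqrt.mul (S.δ_cont.mono hss)
  obtain ⟨s, hs, hs1⟩ := isPreconnected_Ioo.intermediate_value ht ht₂' hcont
    (show (1 : ℝ) ∈ Icc _ _ from ⟨hlt.le, by linarith⟩)
  have := (hsub hs).1 hs1.ge
  simp only at hs1
  linarith

lemma tendsto_p_mul_δ (S : InghamTransform f φ χ δ F X p q t₀ C) :
    Tendsto (fun t => p t * δ t) (𝓝[>] 0) atTop := by
  refine tendsto_atTop_mono' _ ?_ S.tendsto_δ_mul_p_div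
  filter_upwards [eventually_mem S.t₀_pos, S.tendsto_sqrt_mul_δ.eventually_ge_atTop 1,
    S.tendsto_δ_mul_p_div.eventually_ge_atTop 0] with t ⟨ht, ht0⟩ h1 h2
  have hδ := S.δ_le t ht ht0
  have hσ : 0 < √(q t) := Real.sqrt_pos.2 (S.q_pos t ht ht0)
  have h3 : 1 ≤ t * √(q t) := by nlinarith
  calc δ t * p t / (t * √(q t)) = δ t * p t / (t * √(q t)) * 1 := (mul_one _).symm
    _ ≤ δ t * p t / (t * √(q t)) * (t * √(q t)) := by gcongr
    _ = p t * δ t := by field_simp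

lemma exists_X_mul_exp_le (S : InghamTransform f φ χ δ F X p q t₀ C) :
    ∃ t₁ : ℝ, 0 < t₁ ∧ t₁ ≤ t₀ ∧ ∀ t r : ℝ, 0 < t → t ≤ r → r < t₁ →
      X r * Real.exp (F r / 2) ≤ X t * Real.exp (F t / 2) := by
  obtain ⟨t₁, ht₁, hsub⟩ := mem_nhdsGT_iff_exists_Ioo_subset.1
    ((S.tendsto_p_mul_δ.eventually_ge_atTop (2 * (C + 2))).and (eventually_mem S.t₀_pos))
  have ht₁' : (0 : ℝ) < t₁ := ht₁
  have hder : ∀ t ∈ Ioo 0 t₁, HasDerivAt (fun t => X t * Real.exp (F t / 2))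
      ((deriv χ t).re * Real.exp (F t / 2) + X t * (Real.exp (F t / 2) * (-p t / 2))) t :=
    fun t ht => (S.hasDerivAt_X t ht.1 (hsub ht).2.2).mul
      ((S.hasDerivAt_F t ht.1 (hsub ht).2.2).div_const 2).exp
  have hanti : AntitoneOn (fun t => X t * Real.exp (F t / 2)) (Ioo 0 t₁) := by
    refine antitoneOn_of_deriv_nonpos (convex_Ioo _ _)
      (fun t ht => (hder t ht).continuousAt.continuousWithinAt) ?_ ?_
    · rw [interior_Ioo]
      exact fun t ht => (hder t ht).differentiableAt.differentiableWithinAt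
    · rw [interior_Ioo]
      intro t ht
      rw [(hder t ht).deriv]
      obtain ⟨h1, -, ht0⟩ := hsub ht
      have hX := S.X_pos t ht.1 ht0
      have hδ := S.δ_pos t ht.1 ht0
      have h2 : (deriv χ t).re ≤ X t * (p t / 2) := by
        refine (le_abs_self _).trans ((S.abs_deriv_X_le ht.1 ht0).trans ?_)
        rw [div_le_iff₀ hδ]
        nlinarith
      have h3 := mul_le_mul_of_nonneg_right h2 (Real.exp_pos (F t / 2)).le
      linarith
  refine ⟨min t₁ t₀, lt_min ht₁' S.t₀_pos, min_le_right _ _, fun t r ht htr hr => ?_⟩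
  have hr' := hr.trans_le (min_le_left _ _)
  exact hanti ⟨ht, htr.trans_lt hr'⟩ ⟨ht.trans_le htr, hr'⟩ htr

/-- Uniform exponential decay of `f` on vertical segments. -/
lemma norm_le_mul_exp (S : InghamTransform f φ χ δ F X p q t₀ C) {K : ℝ} (hK : 0 < K) :
    ∃ B c : ℝ, 0 < c ∧ ∀ᶠ t : ℝ in 𝓝[>] 0, ∀ y : ℝ, |y| ≤ K * t →
      ‖f (t + y * Complex.I)‖ ≤
        B * (X t * Real.exp (F t)) * Real.exp (-c * (√(q t) * |y|)) := by
  have hC := S.one_le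
  set b : ℝ := 1 / (4 * (C + 2)) with hb
  have hb0 : 0 < b := by positivity
  obtain ⟨c, hc, hsub⟩ := S.exists_mul_le_sub hb0 hK
  obtain ⟨B, hB, hfar⟩ := S.norm_le K hK
  obtain ⟨t₁, ht₁, ht₁₀, hXF⟩ := S.exists_X_mul_exp_le
  refine ⟨max (9 / 4 * Real.exp 1) B, min 1 (c / 2), by positivity, ?_⟩
  filter_upwards [S.norm_near, hfar, eventually_mem (half_pos S.t₀_pos),
    eventually_mem (show 0 < t₁ / (1 + K) by positivity),
    S.tendsto_δ_mul_p_div.eventually_ge_atTop 1] with t h1 h2 ⟨ht, ht2⟩ ⟨_, ht3⟩ hL y hy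
  have ht0 : t < t₀ := by linarith [S.t₀_pos]
  have hX := S.X_pos t ht ht0
  have hq := S.q_pos t ht ht0
  have hσ : 0 < √(q t) := Real.sqrt_pos.2 hq
  have hσ2 : √(q t) ^ 2 = q t := Real.sq_sqrt hq.le
  have hu : 0 ≤ √(q t) * |y| := by positivity
  by_cases hyb : |y| ≤ b * δ t
  · calc ‖f (t + y * Complex.I)‖ ≤ 9 / 4 * X t * Real.exp (F t - q t * y ^ 2 / 4) := (h1 y hyb).2
      _ ≤ 9 / 4 * X t * Real.exp (1 + F t + -min 1 (c / 2) * (√(q t) * |y|)) := by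
        gcongr
        have e : q t * y ^ 2 = (√(q t) * |y|) ^ 2 := by rw [mul_pow, hσ2, sq_abs]
        rw [e]
        have := mul_le_mul_of_nonneg_right (min_le_left 1 (c / 2)) hu
        nlinarith [sq_nonneg (√(q t) * |y| - 2)]
      _ = 9 / 4 * Real.exp 1 * (X t * Real.exp (F t)) *
          Real.exp (-min 1 (c / 2) * (√(q t) * |y|)) := by
        rw [Real.exp_add, Real.exp_add]; ring
      _ ≤ _ := by
        gcongr
        exact le_max_left _ _
  · push Not at hyb
    set r := √(t ^ 2 + y ^ 2) with hr
    have htr : t ≤ r := Real.le_sqrt_of_sq_le (by nlinarith)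
    have hrt : r ≤ (1 + K) * t := by
      refine Real.sqrt_le_iff.2 ⟨by positivity, ?_⟩
      rw [← sq_abs y]
      nlinarith [abs_nonneg y]
    have hr1 : r < t₁ := by
      refine hrt.trans_lt ?_
      rw [lt_div_iff₀ (by positivity)] at ht3
      linarith
    have h3 := hsub t y ht (by linarith) hyb.le hy (hr1.trans_le ht₁₀)
    have h4 := hXF t r ht htr hr1
    have h5 : √(q t) ≤ δ t * p t / t := by
      have e : δ t * p t / t = δ t * p t / (t * √(q t)) * √(q t) := by field_simp
      rw [e]
      nlinarith
    have h6 : c * (√(q t) * |y|) ≤ F t - F r := by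
      refine le_trans ?_ h3
      gcongr
    calc ‖f (t + y * Complex.I)‖ ≤ B * X r * Real.exp (F r) := h2 y hy
      _ = B * (X r * Real.exp (F r / 2)) * Real.exp (F r / 2) := by
        rw [mul_assoc B (X r * _), mul_assoc (X r), ← Real.exp_add, add_halves, mul_assoc]
      _ ≤ B * (X t * Real.exp (F t / 2)) *
          Real.exp (F t / 2 + -min 1 (c / 2) * (√(q t) * |y|)) := by
        gcongr
        have := mul_le_mul_of_nonneg_right (min_le_right 1 (c / 2)) hu
        linarith
      _ = B * (X t * Real.exp (F t)) * Real.exp (-min 1 (c / 2) * (√(q t) * |y|)) := by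
        rw [Real.exp_add, ← add_halves (F t), Real.exp_add, add_halves]; ring
      _ ≤ _ := by
        gcongr
        exact le_max_right _ _

/-- Gaussian behaviour of `f` on vertical lines at the scale `1 / √(q t)`. -/
lemma tendsto_div_mul_exp (S : InghamTransform f φ χ δ F X p q t₀ C) (s : ℝ) :
    Tendsto (fun t : ℝ => f (t + (s / √(q t) : ℝ) * Complex.I) / (X t * Real.exp (F t) : ℝ) *
      Complex.exp (p t * ((s / √(q t) : ℝ) * Complex.I))) (𝓝[>] 0)
      (𝓝 (Real.exp (-(1 / 2) * s ^ 2) : ℝ)) := by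
  have hC := S.one_le
  have hw : ∀ t, ‖((s / √(q t) : ℝ) * Complex.I : ℂ)‖ = |s| / √(q t) := fun t => by
    rw [norm_mul, Complex.norm_I, mul_one, Complex.norm_real, Real.norm_eq_abs, abs_div,
      abs_of_nonneg (Real.sqrt_nonneg _)]
  have hlt : ∀ᶠ t : ℝ in 𝓝[>] 0, ‖((s / √(q t) : ℝ) * Complex.I : ℂ)‖ < δ t := by
    filter_upwards [S.tendsto_sqrt_mul_δ.eventually_gt_atTop |s|, eventually_mem S.t₀_pos]
      with t h1 ⟨ht, ht0⟩
    rw [hw, div_lt_iff₀ (Real.sqrt_pos.2 (S.q_pos t ht ht0)), mul_comm]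
    exact h1
  have hsmall : ∀ c : ℝ, Tendsto (fun t => c / (√(q t) * δ t)) (𝓝[>] 0) (𝓝 0) := fun c =>
    S.tendsto_sqrt_mul_δ.const_div_atTop c
  have l1 : Tendsto (fun t : ℝ => f (t + (s / √(q t) : ℝ) * Complex.I) /
      (χ (t + (s / √(q t) : ℝ) * Complex.I) *
        Complex.exp (φ (t + (s / √(q t) : ℝ) * Complex.I)))) (𝓝[>] 0) (𝓝 1) := by
    rw [Metric.tendsto_nhds]
    intro ε hε
    filter_upwards [hlt, S.norm_div_sub_one_lt ε hε] with t h1 h2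
    rw [dist_eq_norm]
    exact h2 _ h1
  have l2 : Tendsto (fun t : ℝ => χ (t + (s / √(q t) : ℝ) * Complex.I) / X t) (𝓝[>] 0) (𝓝 1) := by
    rw [tendsto_iff_norm_sub_tendsto_zero]
    refine squeeze_zero' (Eventually.of_forall fun _ => norm_nonneg _) ?_ (hsmall ((C + 2) * |s|))
    filter_upwards [hlt, eventually_mem S.t₀_pos] with t h1 ⟨ht, ht0⟩
    have hX := S.X_pos t ht ht0
    have h2 := S.norm_χ_sub_le ht ht0 h1
    have hX0 : (X t : ℂ) ≠ 0 := Complex.ofReal_ne_zero.2 hX.ne'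
    rw [div_sub_one hX0, norm_div, Complex.norm_real, Real.norm_of_nonneg hX.le,
      div_le_iff₀ hX]
    rw [hw] at h2
    refine h2.trans_eq ?_
    have := S.δ_pos t ht ht0
    have := Real.sqrt_pos.2 (S.q_pos t ht ht0)
    field_simp
  have l3 : Tendsto (fun t : ℝ => φ (t + (s / √(q t) : ℝ) * Complex.I) - F t +
      p t * ((s / √(q t) : ℝ) * Complex.I) - q t * ((s / √(q t) : ℝ) * Complex.I) ^ 2 / 2)
      (𝓝[>] 0) (𝓝 0) := by
    rw [tendsto_zero_iff_norm_tendsto_zero]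
    refine squeeze_zero' (Eventually.of_forall fun _ => norm_nonneg _) ?_
      (hsmall ((C + 2) * |s| ^ 3))
    filter_upwards [hlt, eventually_mem S.t₀_pos] with t h1 ⟨ht, ht0⟩
    refine (S.norm_φ_sub_le ht ht0 h1).trans_eq ?_
    have hδ := S.δ_pos t ht ht0
    have hq := S.q_pos t ht ht0
    have hσ := Real.sqrt_pos.2 hq
    rw [hw, div_pow, pow_succ (√(q t)), Real.sq_sqrt hq.le]
    field_simp
  have l4 := (l1.mul l2).mul ((Complex.continuous_exp.tendsto _).comp
    (l3.add_const (((-(1 / 2) * s ^ 2 : ℝ)) : ℂ)))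
  rw [zero_add, one_mul, one_mul, ← Complex.ofReal_exp] at l4
  refine l4.congr' ?_
  filter_upwards [hlt, eventually_mem S.t₀_pos,
    S.norm_div_sub_one_lt 1 one_pos] with t h1 ⟨ht, ht0⟩ h2
  have hX := S.X_pos t ht ht0
  have hX0 : (X t : ℂ) ≠ 0 := Complex.ofReal_ne_zero.2 hX.ne'
  have hq := S.q_pos t ht ht0
  have hσ := Real.sqrt_pos.2 hq
  have h3 := h2 _ h1
  have e1 : (q t : ℂ) * ((s / √(q t) : ℝ) * Complex.I) ^ 2 / 2 = ((-(1 / 2) * s ^ 2 : ℝ) : ℂ) := by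
    rw [mul_pow, Complex.I_sq, ← Complex.ofReal_pow, div_pow, Real.sq_sqrt hq.le]
    push_cast
    have : (q t : ℂ) ≠ 0 := Complex.ofReal_ne_zero.2 hq.ne'
    field_simp
  simp only [Function.comp_apply]
  rw [e1, sub_add_cancel]
  set w : ℂ := (s / √(q t) : ℝ) * Complex.I
  have hχ0 : χ (t + w) ≠ 0 := by
    intro h0
    rw [h0, zero_mul, div_zero, zero_sub, norm_neg, norm_one] at h3
    exact lt_irrefl _ h3
  rw [Complex.exp_add, Complex.exp_sub, Complex.ofReal_mul, Complex.ofReal_exp]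
  have := Complex.exp_ne_zero (φ (t + w))
  have := Complex.exp_ne_zero (F t : ℂ)
  field_simp

end InghamTransform

/-- The image under `u ↦ t * (u - x)` of the measure with density `c * exp (-t * u)`
with respect to `μ`. -/
def expTilt (μ : Measure ℝ) (c t x : ℝ) : Measure ℝ :=
  (μ.withDensity fun u => ENNReal.ofReal (c * Real.exp (-t * u))).map fun u => t * (u - x)

section expTilt

variable {μ : Measure ℝ} {c t x : ℝ}

lemma isFiniteMeasure_expTilt (h : Integrable (fun u => Real.exp (-t * u)) μ) :
    IsFiniteMeasure (expTilt μ c t x) := by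
  have := isFiniteMeasure_withDensity_ofReal (h.const_mul c).2
  exact Measure.isFiniteMeasure_map _ _

lemma setIntegral_expTilt {E : Type*} [NormedAddCommGroup E] [NormedSpace ℝ E] (hc : 0 ≤ c)
    {g : ℝ → E} (hg : StronglyMeasurable g) {s : Set ℝ} (hs : MeasurableSet s) :
    ∫ v in s, g v ∂(expTilt μ c t x) =
      ∫ u in (fun u => t * (u - x)) ⁻¹' s, (c * Real.exp (-t * u)) • g (t * (u - x)) ∂μ := by
  have hm : Measurable fun u : ℝ => t * (u - x) := by fun_prop
  rw [expTilt, setIntegral_map hs hg.aestronglyMeasurable hm.aemeasurable,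
    setIntegral_withDensity_eq_setIntegral_toReal_smul (by fun_prop)
      (Eventually.of_forall fun _ => ENNReal.ofReal_lt_top) _ (hm hs)]
  refine setIntegral_congr_fun (hm hs) fun u _ => ?_
  rw [ENNReal.toReal_ofReal (by positivity)]

lemma integral_expTilt {E : Type*} [NormedAddCommGroup E] [NormedSpace ℝ E] (hc : 0 ≤ c)
    {g : ℝ → E} (hg : StronglyMeasurable g) :
    ∫ v, g v ∂(expTilt μ c t x) = ∫ u, (c * Real.exp (-t * u)) • g (t * (u - x)) ∂μ := by
  simpa using setIntegral_expTilt (μ := μ) (t := t) (x := x) hc hg MeasurableSet.univ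

lemma setIntegral_exp_expTilt (hc : 0 ≤ c) {s : Set ℝ} (hs : MeasurableSet s) :
    ∫ v in s, Real.exp v ∂(expTilt μ c t x) =
      c * Real.exp (-t * x) * μ.real ((fun u => t * (u - x)) ⁻¹' s) := by
  rw [setIntegral_expTilt hc Real.continuous_exp.stronglyMeasurable hs]
  have e : ∀ u, (c * Real.exp (-t * u)) • Real.exp (t * (u - x)) = c * Real.exp (-t * x) := by
    intro u
    rw [smul_eq_mul, mul_assoc, ← Real.exp_add]
    ring_nf
  simp_rw [e]
  rw [setIntegral_const, smul_eq_mul, mul_comm]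

lemma charFun_expTilt (hc : 0 ≤ c) (η : ℝ) :
    charFun (expTilt μ c t x) η = c * Complex.exp (-(η * t * x) * Complex.I) *
      ∫ u : ℝ, Complex.exp (-(t + (-(η * t) : ℝ) * Complex.I) * u) ∂μ := by
  rw [charFun_apply_real, integral_expTilt hc (Continuous.stronglyMeasurable (by fun_prop)),
    ← integral_const_mul]
  congr 1
  ext u
  rw [Complex.real_smul, Complex.ofReal_mul, Complex.ofReal_exp, mul_assoc (c : ℂ),
    mul_assoc (c : ℂ),    ← Complex.exp_add, ← Complex.exp_add]
  congr 2
  push_cast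
  ring

end expTilt

lemma InghamTransform.tendsto_of_seq {f φ χ : ℂ → ℂ} {δ F X p q : ℝ → ℝ} {t₀ C : ℝ}
    (S : InghamTransform f φ χ δ F X p q t₀ C) {μ : Measure ℝ}
    (hexp : ∀ z : ℂ, 0 < z.re → Integrable (fun u : ℝ => Complex.exp (-z * u)) μ)
    (hf : ∀ z : ℂ, 0 < z.re → f z = ∫ u : ℝ, Complex.exp (-z * u) ∂μ)
    {x t a : ℕ → ℝ} (ht : Tendsto t atTop (𝓝[>] 0)) (htm : ∀ n, 0 < t n ∧ t n < t₀)
    (hpt : ∀ n, p (t n) = x n)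
    (hlow : ∀ n, μ.real (Iio (x n)) ≤ a n) (hupp : ∀ n, a n ≤ μ.real (Iic (x n))) :
    Tendsto (fun n => √(2 * Real.pi) * (√(q (t n)) * t n) / (X (t n) * Real.exp (F (t n))) *
      Real.exp (-t n * x n) * a n) atTop (𝓝 1) := by
  set c : ℕ → ℝ := fun n =>
    √(2 * Real.pi) * (√(q (t n)) * t n) / (X (t n) * Real.exp (F (t n))) with hc
  have hX : ∀ n, 0 < X (t n) := fun n => S.X_pos _ (htm n).1 (htm n).2
  have hσ : ∀ n, 0 < √(q (t n)) := fun n => Real.sqrt_pos.2 (S.q_pos _ (htm n).1 (htm n).2)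
  have hT0 : ∀ n, 0 < √(q (t n)) * t n := fun n => mul_pos (hσ n) (htm n).1
  have h2π : 0 < √(2 * Real.pi) := by positivity
  have hc0 : ∀ n, 0 ≤ c n := fun n => by
    have := hX n; have := hT0 n
    positivity
  have hcT : ∀ n, c n / (√(q (t n)) * t n) =
      √(2 * Real.pi) / (X (t n) * Real.exp (F (t n))) := fun n => by
    rw [hc, div_right_comm, mul_div_cancel_right₀ _ (hT0 n).ne']
  have hfin : ∀ n, IsFiniteMeasure (expTilt μ (c n) (t n) (x n)) := fun n => by
    refine isFiniteMeasure_expTilt ?_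
    have h := (hexp (t n) (by simpa using (htm n).1)).norm
    refine h.congr (Eventually.of_forall fun u => ?_)
    simp [Complex.norm_exp]
  have hchar : ∀ (n : ℕ) (s : ℝ), charFun (expTilt μ (c n) (t n) (x n))
      (s / (√(q (t n)) * t n)) / (√(q (t n)) * t n : ℝ) = √(2 * Real.pi) *
      (f (t n + (-s / √(q (t n)) : ℝ) * Complex.I) / (X (t n) * Real.exp (F (t n)) : ℝ) *
      Complex.exp (p (t n) * ((-s / √(q (t n)) : ℝ) * Complex.I))) := fun n s => by
    have ht0 := (htm n).1
    have hσn := hσ n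
    have e : s / (√(q (t n)) * t n) * t n = s / √(q (t n)) := by field_simp
    have e1 : -((s / (√(q (t n)) * t n) : ℝ) * t n * x n) * Complex.I =
        p (t n) * ((-s / √(q (t n)) : ℝ) * Complex.I) := by
      rw [← Complex.ofReal_mul, e, hpt n]
      push_cast
      ring
    have e2 : (c n : ℂ) / (√(q (t n)) * t n : ℝ) =
        √(2 * Real.pi) / (X (t n) * Real.exp (F (t n)) : ℝ) := by
      rw [← Complex.ofReal_div, hcT n, Complex.ofReal_div]
    rw [charFun_expTilt (hc0 n), e, e1, ← neg_div, ← hf _ (by simpa using ht0), mul_assoc,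
      mul_div_right_comm, e2]
    ring
  refine tendsto_of_charFun_gaussian (ν := fun n => expTilt μ (c n) (t n) (x n))
    (T := fun n => √(q (t n)) * t n) ?_ ?_ ?_ ?_ ?_
  · refine tendsto_atTop_mono (fun n => ?_) (S.tendsto_sqrt_mul_δ.comp ht)
    exact mul_le_mul_of_nonneg_left (S.δ_le _ (htm n).1 (htm n).2) (hσ n).le
  · intro s
    simp only [hchar]
    have h := ((S.tendsto_div_mul_exp (-s)).comp ht).const_mul (√(2 * Real.pi) : ℂ)
    rw [neg_sq, ← Complex.ofReal_mul] at h
    exact h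
  · intro K hK
    obtain ⟨B, b, hb, h⟩ := S.norm_le_mul_exp hK
    refine ⟨√(2 * Real.pi) * B, b, hb, ?_⟩
    filter_upwards [ht.eventually h] with n hn s hs
    have hXn := hX n
    have hσn := hσ n
    have e : |-s / √(q (t n))| = |s| / √(q (t n)) := by
      rw [abs_div, abs_neg, abs_of_pos hσn]
    have h1 := hn (-s / √(q (t n))) (by
      rw [e, div_le_iff₀ hσn]
      linarith)
    rw [e, mul_div_cancel₀ _ hσn.ne'] at h1
    have e3 : ‖Complex.exp (p (t n) * ((-s / √(q (t n)) : ℝ) * Complex.I))‖ = 1 := by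
      rw [← mul_assoc, ← Complex.ofReal_mul, Complex.norm_exp_ofReal_mul_I]
    rw [hchar, norm_mul, norm_mul, e3, mul_one, norm_div, Complex.norm_real, Complex.norm_real,
      Real.norm_of_nonneg h2π.le, Real.norm_of_nonneg (by positivity), mul_assoc]
    gcongr
    rw [div_le_iff₀ (by positivity)]
    linarith
  · refine Eventually.of_forall fun n => ?_
    rw [setIntegral_exp_expTilt (hc0 n) measurableSet_Iio]
    have e : (fun u => t n * (u - x n)) ⁻¹' Iio 0 = Iio (x n) := by
      ext u
      simp [mul_neg_iff, (htm n).1, (htm n).1.le]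
    rw [e]
    exact mul_le_mul_of_nonneg_left (hlow n) (mul_nonneg (hc0 n) (Real.exp_pos _).le)
  · refine Eventually.of_forall fun n => ?_
    rw [setIntegral_exp_expTilt (hc0 n) measurableSet_Iic]
    have e : (fun u => t n * (u - x n)) ⁻¹' Iic 0 = Iic (x n) := by
      ext u
      simp [mul_nonpos_iff, (htm n).1.le, (htm n).1.not_ge]
    rw [e]
    exact mul_le_mul_of_nonneg_left (hupp n) (mul_nonneg (hc0 n) (Real.exp_pos _).le)

lemma deriv_im_eq_zero_of_real {g : ℂ → ℂ} {t : ℝ} (hg : DifferentiableAt ℂ g t)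
    (hreal : ∀ᶠ s : ℝ in 𝓝 t, (g s).im = 0) : (deriv g t).im = 0 := by
  have h1 : HasDerivAt (fun s : ℝ => (g s).im) (deriv g t).im t :=
    Complex.imCLM.hasFDerivAt.comp_hasDerivAt t hg.hasDerivAt.comp_ofReal
  have h2 : HasDerivAt (fun s : ℝ => (g s).im) 0 t :=
    (hasDerivAt_const t (0 : ℝ)).congr_of_eventuallyEq hreal
  exact h1.unique h2

lemma zero_notMem_of_tendsto_mul_deriv {D : Set ℂ} (hD : IsOpen D) {φ : ℂ → ℂ}
    (hφ : DifferentiableOn ℂ φ D)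
    (hb : Tendsto (fun t : ℝ => -t * (deriv φ (t : ℂ)).re) (𝓝[>] (0 : ℝ)) atTop) :
    (0 : ℂ) ∉ D := by
  intro h0
  have h1 : ContinuousAt (deriv φ) ((0 : ℝ) : ℂ) :=
    ((hφ.deriv hD).differentiableAt (hD.mem_nhds (by simpa using h0))).continuousAt
  have h2 : ContinuousAt (fun t : ℝ => -t * (deriv φ (t : ℂ)).re) 0 :=
    continuousAt_neg.mul (Complex.continuous_re.continuousAt.comp
      (h1.comp Complex.continuous_ofReal.continuousAt))
  exact not_tendsto_nhds_of_tendsto_atTop hb _ (h2.tendsto.mono_left nhdsWithin_le_nhds)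

lemma ball_infDist_compl_subset {α : Type*} [PseudoMetricSpace α] (x : α) (s : Set α) :
    Metric.ball x (Metric.infDist x sᶜ) ⊆ s :=
  disjoint_compl_right_iff_subset.1 Metric.disjoint_ball_infDist

/-- The hypotheses of Ingham's theorem in normalised form. -/
lemma exists_inghamData (D : Set ℂ) (hDopen : IsOpen D)
    (h : ℝ) (hh : 0 < h) (hD : ∀ t : ℝ, 0 < t → t ≤ h → (t : ℂ) ∈ D)
    (δ : ℝ → ℝ) (hδ : ∀ t : ℝ, 0 < t → t ≤ h → δ t = Metric.infDist (t : ℂ) Dᶜ)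
    (φ χ : ℂ → ℂ)
    (hφdiff : DifferentiableOn ℂ φ D) (hχdiff : DifferentiableOn ℂ χ D)
    (hφpos : ∀ t : ℝ, 0 < t → t ≤ h → (φ (t : ℂ)).im = 0 ∧ 0 < (φ (t : ℂ)).re)
    (hχpos : ∀ t : ℝ, 0 < t → t ≤ h → (χ (t : ℂ)).im = 0 ∧ 0 < (χ (t : ℂ)).re)
    (hb : Tendsto (fun t : ℝ => -t * (deriv φ (t : ℂ)).re) (𝓝[>] (0 : ℝ)) atTop)
    (hc : Tendsto (fun t : ℝ =>
        -δ t * (deriv φ (t : ℂ)).re / (t * Real.sqrt ((iteratedDeriv 2 φ (t : ℂ)).re)))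
      (𝓝[>] (0 : ℝ)) atTop)
    (hd : ∃ C t₀ : ℝ, 0 < t₀ ∧ ∀ t : ℝ, 0 < t → t ≤ t₀ → ∀ z : ℂ, ‖z‖ < δ t →
        ‖iteratedDeriv 2 φ ((t : ℂ) + z)‖ ≤ C * ‖iteratedDeriv 2 φ (t : ℂ)‖ ∧
        ‖χ ((t : ℂ) + z)‖ ≤ C * ‖χ (t : ℂ)‖) :
    ∃ t₀ C : ℝ, t₀ ≤ h ∧ InghamData φ χ δ (fun t => (φ t).re) (fun t => (χ t).re)
      (fun t => -(deriv φ t).re) (fun t => (iteratedDeriv 2 φ t).re) t₀ C := by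
  have h0D : (0 : ℂ) ∈ Dᶜ := zero_notMem_of_tendsto_mul_deriv hDopen hφdiff hb
  have e2 : iteratedDeriv 2 φ = deriv (deriv φ) := by
    rw [iteratedDeriv_succ, iteratedDeriv_one]
  obtain ⟨C, t', ht', hC⟩ := hd
  have hev : ∀ᶠ t : ℝ in 𝓝[>] 0, 0 < -(deriv φ (t : ℂ)).re ∧
      0 < (iteratedDeriv 2 φ (t : ℂ)).re ∧ t < h ∧ t ≤ t' := by
    filter_upwards [hb.eventually_gt_atTop 0, hc.eventually_gt_atTop 0, Ioo_mem_nhdsGT hh,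
      Ioo_mem_nhdsGT ht'] with t h1 h2 h3 h4
    refine ⟨?_, ?_, h3.2, h4.2.le⟩
    · rw [neg_mul, ← mul_neg] at h1
      exact pos_of_mul_pos_right h1 h3.1.le
    · by_contra! h5
      rw [Real.sqrt_eq_zero_of_nonpos h5, mul_zero, div_zero] at h2
      exact lt_irrefl _ h2
  obtain ⟨t₁, ht₁, hsub⟩ := mem_nhdsGT_iff_exists_Ioo_subset.1 hev
  have ht₁' : (0 : ℝ) < t₁ := ht₁
  set t₀ := min t₁ h with ht₀
  have hp : ∀ t : ℝ, 0 < t → t < t₀ → 0 < -(deriv φ (t : ℂ)).re := fun t h1 h2 =>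
    (hsub ⟨h1, h2.trans_le (min_le_left _ _)⟩).1
  have hq : ∀ t : ℝ, 0 < t → t < t₀ → 0 < (iteratedDeriv 2 φ (t : ℂ)).re := fun t h1 h2 =>
    (hsub ⟨h1, h2.trans_le (min_le_left _ _)⟩).2.1
  have hth : ∀ t : ℝ, t < t₀ → t ≤ h := fun t h2 => (h2.trans_le (min_le_right _ _)).le
  have htt : ∀ t : ℝ, 0 < t → t < t₀ → t ≤ t' := fun t h1 h2 =>
    (hsub ⟨h1, h2.trans_le (min_le_left _ _)⟩).2.2.2
  have hball : ∀ t : ℝ, 0 < t → t < t₀ → Metric.ball (t : ℂ) (δ t) ⊆ D := fun t h1 h2 => by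
    rw [hδ t h1 (hth t h2)]
    exact ball_infDist_compl_subset _ _
  have hnhds : ∀ t : ℝ, 0 < t → t < t₀ → D ∈ 𝓝 (t : ℂ) := fun t h1 h2 =>
    hDopen.mem_nhds (hD t h1 (hth t h2))
  have hφ0 : ∀ t : ℝ, 0 < t → t < t₀ → DifferentiableAt ℂ φ t := fun t h1 h2 =>
    hφdiff.differentiableAt (hnhds t h1 h2)
  have hφ1 : ∀ t : ℝ, 0 < t → t < t₀ → DifferentiableAt ℂ (deriv φ) t := fun t h1 h2 =>
    (hφdiff.deriv hDopen).differentiableAt (hnhds t h1 h2)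
  have hφ2 : ∀ t : ℝ, 0 < t → t < t₀ → DifferentiableAt ℂ (deriv (deriv φ)) t := fun t h1 h2 =>
    ((hφdiff.deriv hDopen).deriv hDopen).differentiableAt (hnhds t h1 h2)
  have him1 : ∀ t : ℝ, 0 < t → t < t₀ → (deriv φ t).im = 0 := fun t h1 h2 => by
    refine deriv_im_eq_zero_of_real (hφ0 t h1 h2) ?_
    filter_upwards [Ioo_mem_nhds h1 h2] with s hs
    exact (hφpos s hs.1 (hth s hs.2)).1
  have him2 : ∀ t : ℝ, 0 < t → t < t₀ → (iteratedDeriv 2 φ t).im = 0 := fun t h1 h2 => by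
    rw [e2]
    refine deriv_im_eq_zero_of_real (hφ1 t h1 h2) ?_
    filter_upwards [Ioo_mem_nhds h1 h2] with s hs
    exact him1 s hs.1 hs.2
  have hqe : ∀ t : ℝ, 0 < t → t < t₀ →
      iteratedDeriv 2 φ (t : ℂ) = ((iteratedDeriv 2 φ (t : ℂ)).re : ℝ) := fun t h1 h2 =>
    Complex.ext (by simp) (by simp [him2 t h1 h2])
  have hχe : ∀ t : ℝ, 0 < t → t < t₀ → χ (t : ℂ) = ((χ (t : ℂ)).re : ℝ) := fun t h1 h2 =>
    Complex.ext (by simp) (by simp [(hχpos t h1 (hth t h2)).1])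
  have hadd : ∀ (t : ℝ) (z : ℂ), z ∈ Metric.ball (t : ℂ) (δ t) →
      ‖z - t‖ < δ t ∧ (t : ℂ) + (z - t) = z := fun t z hz =>
    ⟨mem_ball_iff_norm.1 hz, by ring⟩
  refine ⟨t₀, max C 1, min_le_right _ _, ?_⟩
  exact
  { t₀_pos := lt_min ht₁' hh
    one_le := le_max_right _ _
    δ_pos := fun t h1 h2 => by
      rw [hδ t h1 (hth t h2)]
      exact (hDopen.isClosed_compl.notMem_iff_infDist_pos ⟨0, h0D⟩).1
        (not_not.2 (hD t h1 (hth t h2)))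
    δ_le := fun t h1 h2 => by
      rw [hδ t h1 (hth t h2)]
      refine (Metric.infDist_le_dist_of_mem h0D).trans_eq ?_
      rw [dist_zero_right, Complex.norm_real, Real.norm_of_nonneg h1.le]
    δ_lip := fun s t h1 h2 h3 h4 => by
      rw [hδ t h1 (hth t h2), hδ s h3 (hth s h4)]
      refine (Metric.infDist_le_infDist_add_dist (y := (s : ℂ))).trans_eq ?_
      rw [dist_comm, dist_eq_norm, ← Complex.ofReal_sub, Complex.norm_real, Real.norm_eq_abs]
    δ_cont := ((Metric.continuous_infDist_pt _).comp Complex.continuous_ofReal).continuousOn.congr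
      fun t ht => hδ t ht.1 (hth t ht.2)
    φ_diff := fun t h1 h2 => hφdiff.mono (hball t h1 h2)
    χ_diff := fun t h1 h2 => hχdiff.mono (hball t h1 h2)
    φ_eq := fun t h1 h2 => Complex.ext (by simp) (by simp [(hφpos t h1 (hth t h2)).1])
    χ_eq := hχe
    deriv_φ := fun t h1 h2 => Complex.ext (by simp) (by simp [him1 t h1 h2])
    deriv_two_φ := hqe
    X_pos := fun t h1 h2 => (hχpos t h1 (hth t h2)).2
    p_pos := hp
    q_pos := hq
    q_cont := fun t ht => by
      rw [e2]
      exact (Complex.continuous_re.continuousAt.comp ((hφ2 t ht.1 ht.2).continuousAt.comp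
        Complex.continuous_ofReal.continuousAt)).continuousWithinAt
    bound_φ := fun t h1 h2 z hz => by
      obtain ⟨h3, h4⟩ := hadd t z hz
      have h5 := (hC t h1 (htt t h1 h2) _ h3).1
      rw [h4, hqe t h1 h2, Complex.norm_real, Real.norm_of_nonneg (hq t h1 h2).le] at h5
      exact h5.trans (mul_le_mul_of_nonneg_right (le_max_left _ _) (hq t h1 h2).le)
    bound_χ := fun t h1 h2 z hz => by
      obtain ⟨h3, h4⟩ := hadd t z hz
      have h5 := (hC t h1 (htt t h1 h2) _ h3).2
      have hX := (hχpos t h1 (hth t h2)).2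
      rw [h4, hχe t h1 h2, Complex.norm_real, Real.norm_of_nonneg hX.le] at h5
      exact h5.trans (mul_le_mul_of_nonneg_right (le_max_left _ _) hX.le)
    hasDerivAt_F := fun t h1 h2 => by
      rw [neg_neg]
      exact (hφ0 t h1 h2).hasDerivAt.real_of_complex
    hasDerivAt_p := fun t h1 h2 => by
      rw [e2]
      exact (hφ1 t h1 h2).hasDerivAt.real_of_complex.neg
    hasDerivAt_X := fun t h1 h2 =>
      (hχdiff.differentiableAt (hnhds t h1 h2)).hasDerivAt.real_of_complex }

lemma tendsto_nhdsGT_zero_of_neg_deriv_eq {D : Set ℂ} (hDopen : IsOpen D) {h : ℝ}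
    (hD : ∀ t : ℝ, 0 < t → t ≤ h → (t : ℂ) ∈ D) {φ : ℂ → ℂ} (hφdiff : DifferentiableOn ℂ φ D)
    {ψ : ℝ → ℝ}
    (hψ : ∀ᶠ x in atTop, 0 < ψ x ∧ ψ x ≤ h ∧ -(deriv φ ((ψ x : ℝ) : ℂ)).re = x) :
    Tendsto ψ atTop (𝓝[>] 0) := by
  rw [tendsto_nhdsWithin_iff]
  refine ⟨?_, hψ.mono fun x hx => hx.1⟩
  rw [Metric.tendsto_nhds]
  intro ε hε
  have hcont : ContinuousOn (fun t : ℝ => deriv φ t) (Icc ε h) :=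
    (hφdiff.deriv hDopen).continuousOn.comp Complex.continuous_ofReal.continuousOn
      fun t ht => hD t (hε.trans_le ht.1) ht.2
  obtain ⟨B, hB⟩ := isCompact_Icc.exists_bound_of_continuousOn hcont
  filter_upwards [hψ, eventually_gt_atTop B] with x ⟨h1, h2, h3⟩ h4
  rw [Real.dist_eq, sub_zero, abs_of_pos h1]
  by_contra! h5
  have h6 := (neg_le_abs _).trans ((Complex.abs_re_le_norm _).trans (hB (ψ x) ⟨h5, h2⟩))
  linarith

lemma Monotone.measure_sandwich {A : ℝ → ℝ} (hA : Monotone A) (hA0 : ∀ x ≤ 0, A x = 0) {x : ℝ}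
    (hx : 0 ≤ x) : (hA.stieltjesFunction.measure.restrict (Ici 0)).real (Iio x) ≤ A x ∧
      A x ≤ (hA.stieltjesFunction.measure.restrict (Ici 0)).real (Iic x) := by
  have hval : ∀ y, hA.stieltjesFunction y = Function.rightLim A y := fun y => rfl
  have hfun : (hA.stieltjesFunction : ℝ → ℝ) = Function.rightLim A := funext hval
  have hleft : ∀ y, Function.leftLim hA.stieltjesFunction y = Function.leftLim A y := fun y => by
    rw [hfun, leftLim_rightLim (hA.tendsto_leftLim y)]
  have h0 : Function.leftLim A 0 = 0 := by
    refine leftLim_eq_of_tendsto (tendsto_const_nhds.congr' ?_)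
    filter_upwards [self_mem_nhdsWithin] with y hy
    exact (hA0 y (le_of_lt hy)).symm
  have hAx : 0 ≤ A x := (hA0 0 le_rfl).symm.le.trans (hA hx)
  constructor
  · rw [measureReal_restrict_apply measurableSet_Iio, Set.inter_comm, Ici_inter_Iio,
      measureReal_def, StieltjesFunction.measure_Ico, hleft, hleft, h0, sub_zero,
      ENNReal.toReal_ofReal']
    exact max_le (hA.leftLim_le le_rfl) hAx
  · rw [measureReal_restrict_apply measurableSet_Iic, Set.inter_comm, Ici_inter_Iic,
      measureReal_def, StieltjesFunction.measure_Icc, hleft, h0, sub_zero, hval,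
      ENNReal.toReal_ofReal (hAx.trans (hA.le_rightLim le_rfl))]
    exact hA.le_rightLim le_rfl

/-- Ingham's Tauberian theorem. `A : ℝ → ℝ` is weakly increasing with `A = 0` on `(-∞,0]`
(representing a weakly increasing function on `[0,∞)` with `A(0) = 0`), and
`f(z) = ∫_0^∞ e^{-zu} dA(u)` is the Lebesgue–Stieltjes integral with respect to `A`. -/
theorem ingham_tauberian
    (D : Set ℂ) (hDopen : IsOpen D) (hDconn : IsConnected D)
    (h : ℝ) (hh : 0 < h) (hD : ∀ t : ℝ, 0 < t → t ≤ h → (t : ℂ) ∈ D)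
    -- δ(t) is the distance from t to the complement of D
    (δ : ℝ → ℝ) (hδ : ∀ t : ℝ, 0 < t → t ≤ h → δ t = Metric.infDist (t : ℂ) Dᶜ)
    (φ χ : ℂ → ℂ)
    -- (a) φ and χ are holomorphic on D, and positive on (0,h]
    (hφdiff : DifferentiableOn ℂ φ D) (hχdiff : DifferentiableOn ℂ χ D)
    (hφpos : ∀ t : ℝ, 0 < t → t ≤ h → (φ (t : ℂ)).im = 0 ∧ 0 < (φ (t : ℂ)).re)
    (hχpos : ∀ t : ℝ, 0 < t → t ≤ h → (χ (t : ℂ)).im = 0 ∧ 0 < (χ (t : ℂ)).re)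
    -- (b) -t φ'(t) → ∞ as t → 0⁺
    (hb : Tendsto (fun t : ℝ => -t * (deriv φ (t : ℂ)).re) (𝓝[>] (0:ℝ)) atTop)
    -- (c) -δ(t) φ'(t) / (t √(φ''(t))) → ∞ as t → 0⁺
    (hc : Tendsto (fun t : ℝ =>
        -δ t * (deriv φ (t : ℂ)).re / (t * Real.sqrt ((iteratedDeriv 2 φ (t : ℂ)).re)))
      (𝓝[>] (0:ℝ)) atTop)
    -- (d) φ''(t+z) = O(φ''(t)) and χ(t+z) = O(χ(t)) uniformly over |z| < δ(t) as t → 0⁺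
    (hd : ∃ C t₀ : ℝ, 0 < t₀ ∧ ∀ t : ℝ, 0 < t → t ≤ t₀ → ∀ z : ℂ, ‖z‖ < δ t →
        ‖iteratedDeriv 2 φ ((t : ℂ) + z)‖ ≤ C * ‖iteratedDeriv 2 φ (t : ℂ)‖ ∧
        ‖χ ((t : ℂ) + z)‖ ≤ C * ‖χ (t : ℂ)‖)
    (A : ℝ → ℝ) (hAmono : Monotone A) (hA0 : ∀ x : ℝ, x ≤ 0 → A x = 0)
    (f : ℂ → ℂ)
    (hfdef : ∀ z : ℂ, 0 < z.re →
        f z = ∫ u in Ici (0:ℝ), Complex.exp (-z * u) ∂hAmono.stieltjesFunction.measure)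
    -- f(z) exists for Re(z) > 0
    (hfint : ∀ z : ℂ, 0 < z.re →
        IntegrableOn (fun u : ℝ => Complex.exp (-z * u)) (Ici (0:ℝ))
          hAmono.stieltjesFunction.measure)
    -- (i) f(z) ~ χ(z) e^{φ(z)} as z → 0 in D
    (hi : Tendsto (fun z : ℂ => f z / (χ z * Complex.exp (φ z))) (𝓝[D \ {0}] 0) (𝓝 1))
    -- (ii) for each Δ > 0, f(z) = O(χ(|z|) e^{φ(|z|)}) as z → 0 with |Im z| ≤ Δ Re z
    (hii : ∀ Δ : ℝ, 0 < Δ → ∃ C ρ : ℝ, 0 < C ∧ 0 < ρ ∧ ∀ z : ℂ, 0 < z.re →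
        |z.im| ≤ Δ * z.re → ‖z‖ < ρ →
        ‖f z‖ ≤ C * ‖χ ((‖z‖ : ℝ) : ℂ)‖ * Real.exp ((φ ((‖z‖ : ℝ) : ℂ)).re))
    -- ψ is the inverse function of -φ'
    (ψ : ℝ → ℝ)
    (hψ : ∀ᶠ x in atTop, 0 < ψ x ∧ ψ x ≤ h ∧ -(deriv φ ((ψ x : ℝ) : ℂ)).re = x) :
    Tendsto (fun x : ℝ => A x /
        ((χ ((ψ x : ℝ) : ℂ)).re * Real.exp ((φ ((ψ x : ℝ) : ℂ)).re + x * ψ x) /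
          (ψ x * Real.sqrt (2 * Real.pi * (iteratedDeriv 2 φ ((ψ x : ℝ) : ℂ)).re))))
      atTop (𝓝 1) := by
  obtain ⟨t₀, C, ht₀h, S⟩ := exists_inghamData D hDopen h hh hD δ hδ φ χ hφdiff hχdiff hφpos hχpos
    hb hc hd
  have h0D := zero_notMem_of_tendsto_mul_deriv hDopen hφdiff hb
  have hball : ∀ t : ℝ, 0 < t → t < t₀ → Metric.ball (t : ℂ) (δ t) ⊆ D := fun t h1 h2 => by
    rw [hδ t h1 (h2.le.trans ht₀h)]
    exact ball_infDist_compl_subset _ _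
  have T : InghamTransform f φ χ δ (fun t => (φ t).re) (fun t => (χ t).re)
      (fun t => -(deriv φ t).re) (fun t => (iteratedDeriv 2 φ t).re) t₀ C :=
  { S with
    tendsto_mul_p := hb.congr fun t => by ring
    tendsto_δ_mul_p_div := hc.congr fun t => by ring
    norm_div_sub_one_lt := fun ε hε => by
      have h1 := Metric.tendsto_nhds.1 hi ε hε
      rw [eventually_nhdsWithin_iff, Metric.eventually_nhds_iff] at h1
      obtain ⟨ρ, hρ, h1⟩ := h1
      filter_upwards [Ioo_mem_nhdsGT (half_pos hρ), Ioo_mem_nhdsGT S.t₀_pos] with t h2 h3 w hw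
      rw [← dist_eq_norm]
      have hmem : (t : ℂ) + w ∈ D := hball t h3.1 h3.2 (by simpa using hw)
      refine h1 ?_ ⟨hmem, fun h0 => h0D (h0 ▸ hmem)⟩
      rw [dist_zero_right]
      have h4 := norm_add_le (t : ℂ) w
      rw [Complex.norm_real, Real.norm_of_nonneg h2.1.le] at h4
      linarith [S.δ_le t h3.1 h3.2, h2.2]
    norm_le := fun K hK => by
      obtain ⟨B, ρ, hB, hρ, h1⟩ := hii K hK
      refine ⟨B, hB, ?_⟩
      have hm : 0 < min ρ t₀ / (1 + K) := div_pos (lt_min hρ S.t₀_pos) (by positivity)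
      filter_upwards [Ioo_mem_nhdsGT hm] with t ⟨ht, htm⟩ y hy
      rw [lt_div_iff₀ (by positivity)] at htm
      have hr : √(t ^ 2 + y ^ 2) ≤ t * (1 + K) := by
        refine Real.sqrt_le_iff.2 ⟨by positivity, ?_⟩
        rw [← sq_abs y]
        nlinarith [abs_nonneg y]
      have hr0 : 0 < √(t ^ 2 + y ^ 2) := by positivity
      have hrt : √(t ^ 2 + y ^ 2) < t₀ := (hr.trans_lt htm).trans_le (min_le_right _ _)
      have h2 := h1 (t + y * Complex.I) (by simpa using ht) (by simpa using hy) (by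
        rw [Complex.norm_add_mul_I]
        exact (hr.trans_lt htm).trans_le (min_le_left _ _))
      rw [Complex.norm_add_mul_I, S.χ_eq _ hr0 hrt, Complex.norm_real,
        Real.norm_of_nonneg (S.X_pos _ hr0 hrt).le] at h2
      exact h2 }
  have hψ0 := tendsto_nhdsGT_zero_of_neg_deriv_eq hDopen hD hφdiff hψ
  refine tendsto_of_seq_tendsto fun u hu => ?_
  have hev : ∀ᶠ n in atTop, (0 ≤ u n ∧ -(deriv φ ((ψ (u n) : ℝ) : ℂ)).re = u n) ∧
      ψ (u n) ∈ Ioo 0 t₀ :=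
    hu.eventually (((eventually_ge_atTop 0).and (hψ.mono fun x hx => hx.2.2)).and
      (hψ0.eventually (Ioo_mem_nhdsGT S.t₀_pos)))
  obtain ⟨N, hN⟩ := eventually_atTop.1 hev
  rw [← tendsto_add_atTop_iff_nat N]
  have hN' : ∀ n, (0 ≤ u (n + N) ∧ -(deriv φ ((ψ (u (n + N)) : ℝ) : ℂ)).re = u (n + N)) ∧
      ψ (u (n + N)) ∈ Ioo 0 t₀ := fun n => hN _ (Nat.le_add_left _ _)
  refine (T.tendsto_of_seq (μ := hAmono.stieltjesFunction.measure.restrict (Ici 0)) hfint hfdef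
    (x := fun n => u (n + N)) (t := fun n => ψ (u (n + N))) (a := fun n => A (u (n + N)))
    (hψ0.comp ((tendsto_add_atTop_iff_nat N).2 hu)) (fun n => (hN' n).2) (fun n => (hN' n).1.2)
    (fun n => (hAmono.measure_sandwich hA0 (hN' n).1.1).1)
    (fun n => (hAmono.measure_sandwich hA0 (hN' n).1.1).2)).congr fun n => ?_
  obtain ⟨-, ht, ht0⟩ := hN' n
  have hX := S.X_pos _ ht ht0
  have hσ := Real.sqrt_pos.2 (S.q_pos _ ht ht0)
  rw [Function.comp_apply, Real.sqrt_mul Real.two_pi_pos.le, Real.exp_add,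
    neg_mul, Real.exp_neg, mul_comm (u (n + N)) (ψ _)]
  field_simp

end
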